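/- There exist finite sets P and Q of points in the plane in general position, each of cardinality 6, and a bijection φ: P → Q, with the following three properties: (i) there are no compatible triangulations of P and Q via φ; (ii) for every choice of a single Steiner point a_P ∉ P and a single Steiner point a_Q ∉ Q, there are no compatible triangulations of P ∪ {a_P} and Q ∪ {a_Q} via any bijection extending φ (with φ extended by a_P ↦ a_Q); (iii) there exist two Steiner points a_P, b_P ∉ P and two Steiner points a_Q, b_Q ∉ Q such that P ∪ {a_P, b_P} and Q ∪ {a_Q, b_Q} have compatible triangulations via the bijection extending φ by a_P ↦ a_Q and b_P ↦ b_Q. -/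

import Mathlib

open Set

/-- Points of the plane. -/
abbrev Pt : Type := ℝ × ℝ

noncomputable section

/-- The determinant of two plane vectors. -/
def det2 (u v : Pt) : ℝ := u.1 * v.2 - u.2 * v.1

/-- A triple `(a,b,c)` of points is clockwise-ordered if `det (b-a, c-a) < 0`. -/
def Clockwise (a b c : Pt) : Prop := det2 (b - a) (c - a) < 0

/-- The closed segments `[a,b]` and `[c,d]` cross: they intersect in a point that is not a
common endpoint of the two segments. -/
def Crosses (a b c d : Pt) : Prop :=
  ∃ x : Pt, x ∈ segment ℝ a b ∧ x ∈ segment ℝ c d ∧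
    ¬((x = a ∨ x = b) ∧ (x = c ∨ x = d))

/-- `T` is a set of unordered pairs of distinct points of `P` whose corresponding
segments are pairwise non-crossing. -/
def ValidSegs (P : Finset Pt) (T : Set (Sym2 Pt)) : Prop :=
  (∀ e ∈ T, ∃ a b : Pt, a ∈ P ∧ b ∈ P ∧ a ≠ b ∧ e = s(a, b)) ∧
  (∀ a b c d : Pt, s(a, b) ∈ T → s(c, d) ∈ T → s(a, b) ≠ s(c, d) → ¬ Crosses a b c d)

/-- A triangulation of `P`: a maximal (w.r.t. inclusion) set of unordered pairs of distinct
points of `P`, no two of whose segments cross. -/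
def IsTriangulation (P : Finset Pt) (T : Set (Sym2 Pt)) : Prop :=
  ValidSegs P T ∧ ∀ T' : Set (Sym2 Pt), ValidSegs P T' → T ⊆ T' → T' = T

/-- A convex hull point of `P`: a point of `P` on the boundary of `conv P`. -/
def HullPoint (P : Finset Pt) (p : Pt) : Prop :=
  p ∈ P ∧ p ∈ frontier (convexHull ℝ (P : Set Pt))

/-- An internal point of `P`: a point of `P` in the interior of `conv P`. -/
def InternalPoint (P : Finset Pt) (p : Pt) : Prop :=
  p ∈ P ∧ p ∈ interior (convexHull ℝ (P : Set Pt))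

/-- The number of convex hull points of `P`. -/
def hullCount (P : Finset Pt) : ℕ := {p : Pt | HullPoint P p}.ncard

/-- The number of internal points of `P`. -/
def internalCount (P : Finset Pt) : ℕ := {p : Pt | InternalPoint P p}.ncard

/-- The open triangle with vertices `a`, `b`, `c`. -/
def openTriangle (a b c : Pt) : Set Pt := interior (convexHull ℝ ({a, b, c} : Set Pt))

/-- `(a,b,c)` is a triangle of the triangulation `T` of `P`: the three points are distinct
points of `P`, the three pairs are in `T`, and the open triangle `abc` contains no point of
`P` and meets no segment of `T`. -/
def IsTriangleOf (P : Finset Pt) (T : Set (Sym2 Pt)) (a b c : Pt) : Prop :=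
  a ∈ P ∧ b ∈ P ∧ c ∈ P ∧ a ≠ b ∧ b ≠ c ∧ a ≠ c ∧
  s(a, b) ∈ T ∧ s(b, c) ∈ T ∧ s(a, c) ∈ T ∧
  (∀ p ∈ P, p ∉ openTriangle a b c) ∧
  (∀ u v : Pt, s(u, v) ∈ T → ∀ x ∈ segment ℝ u v, x ∉ openTriangle a b c)

/-- Triangulations `TP` of `P` and `TQ` of `Q` are compatible via the bijection `φ : P → Q`:
`(a,b,c)` is a clockwise-ordered triangle of `TP` iff `(φ a, φ b, φ c)` is a
clockwise-ordered triangle of `TQ`. -/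
def CompatibleVia (P Q : Finset Pt) (TP TQ : Set (Sym2 Pt)) (φ : Pt → Pt) : Prop :=
  Set.BijOn φ (P : Set Pt) (Q : Set Pt) ∧
  ∀ a b c : Pt, a ∈ P → b ∈ P → c ∈ P →
    ((IsTriangleOf P TP a b c ∧ Clockwise a b c) ↔
     (IsTriangleOf Q TQ (φ a) (φ b) (φ c) ∧ Clockwise (φ a) (φ b) (φ c)))

/-- Triangulations `TP` of `P` and `TQ` of `Q` are compatible. -/
def Compatible (P Q : Finset Pt) (TP TQ : Set (Sym2 Pt)) : Prop :=
  ∃ φ : Pt → Pt, CompatibleVia P Q TP TQ φ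

/-- The degree of a point `p` in a triangulation `T`: the number of pairs of `T`
containing `p`. -/
def degreeIn (T : Set (Sym2 Pt)) (p : Pt) : ℕ := {e ∈ T | p ∈ e}.ncard

/-- `P` is in general position: no three points of `P` are collinear. -/
def GenPos (P : Finset Pt) : Prop :=
  ∀ a b c : Pt, a ∈ P → b ∈ P → c ∈ P → a ≠ b → b ≠ c → a ≠ c →
    ¬ Collinear ℝ ({a, b, c} : Set Pt)

end

/-! The point set `Q` is the mirror image of `P`, so the bijection reverses every orientation and no
triangle with all its vertices in `P` can be matched. If only one Steiner point `a` is added, then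
some point `i` of `P` interior to the convex hull of `P` lies on no segment from `a` to another
point of `P`; the triangle at `i` containing the direction from `a` to `i` then has all its vertices
in `P`. With two Steiner points on either side of the path formed by the points of `P`, joining both
of them to every vertex of the path leaves no triangle with all its vertices in `P`.
-/

section Segments

variable {E : Type*} [AddCommGroup E] [Module ℝ E] {a b x y z : E}

lemma exists_apply_eq_of_mem_segment (hx : x ∈ segment ℝ a b) :
    ∃ t : ℝ, 0 ≤ t ∧ t ≤ 1 ∧ ∀ f : E →ᵃ[ℝ] ℝ, f x = (1 - t) * f a + t * f b := by
  obtain ⟨s, t, hs, ht, hst, rfl⟩ := hx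
  refine ⟨t, ht, by linarith, fun f => ?_⟩
  rw [Convex.combo_affine_apply hst, ← hst, add_sub_cancel_right, smul_eq_mul, smul_eq_mul]

lemma exists_apply_eq_of_mem_openSegment (hx : x ∈ openSegment ℝ a b) :
    ∃ t : ℝ, 0 < t ∧ t < 1 ∧ ∀ f : E →ᵃ[ℝ] ℝ, f x = (1 - t) * f a + t * f b := by
  obtain ⟨s, t, hs, ht, hst, rfl⟩ := hx
  refine ⟨t, ht, by linarith, fun f => ?_⟩
  rw [Convex.combo_affine_apply hst, ← hst, add_sub_cancel_right, smul_eq_mul, smul_eq_mul]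

lemma exists_mem_segment_apply_eq {t : ℝ} (f : E →ᵃ[ℝ] ℝ) (hx : f x ≤ t) (hy : t ≤ f y) :
    ∃ z ∈ segment ℝ x y, f z = t := by
  have ht : t ∈ segment ℝ (f x) (f y) := segment_eq_Icc (hx.trans hy) ▸ ⟨hx, hy⟩
  rwa [← image_segment] at ht

lemma exists_lineMap_eq_of_mem_segment (hz : z ∈ segment ℝ x y) (hzx : z ≠ x) :
    ∃ t : ℝ, 0 < t ∧ t ≤ 1 ∧ AffineMap.lineMap x y t = z := by
  rw [segment_eq_image_lineMap] at hz
  obtain ⟨t, ⟨ht0, ht1⟩, rfl⟩ := hz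
  exact ⟨t, ht0.lt_of_ne fun h => hzx (by rw [← h, AffineMap.lineMap_apply_zero]), ht1, rfl⟩

lemma mul_apply_lt_of_mem_segment {f g : E →ᵃ[ℝ] ℝ} (h : f x * g y < g x * f y)
    (hz : z ∈ segment ℝ x y) (hzx : z ≠ x) : f x * g z < g x * f z := by
  obtain ⟨t, ht, -, rfl⟩ := exists_lineMap_eq_of_mem_segment hz hzx
  simp only [AffineMap.apply_lineMap, AffineMap.lineMap_apply_ring']
  nlinarith [mul_pos ht (sub_pos.2 h)]

lemma exists_eq_add_smul_of_mem_openSegment (hx : x ∈ openSegment ℝ a b) :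
    ∃ s : ℝ, 0 < s ∧ a = x + s • (x - b) := by
  obtain ⟨t, u, ht, hu, htu, rfl⟩ := hx
  refine ⟨u / t, div_pos hu ht, smul_right_injective _ ht.ne' ?_⟩
  obtain rfl : t = 1 - u := by linarith
  simp only [smul_add, smul_smul, mul_div_cancel₀ _ ht.ne']
  module

lemma sameRay_sub_of_mem_segment (hx : x ∈ segment ℝ a y) : SameRay ℝ (x - a) (y - a) :=
  (mem_segment_iff_wbtw.1 hx).sameRay_vsub_left

lemma eq_or_eq_of_mem_segment_of_notMem (hx : x ∈ segment ℝ y z) (h : x ∉ openSegment ℝ y z) :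
    x = y ∨ x = z := by
  rw [← insert_endpoints_openSegment] at hx
  simpa [h] using hx

end Segments

section Plane

variable {a b c o v w x : Pt}

lemma det2_self (v : Pt) : det2 v v = 0 := by
  simp only [det2]
  ring

lemma det2_swap (v w : Pt) : det2 v w = -det2 w v := by
  simp only [det2]
  ring

lemma det2_neg_left (v w : Pt) : det2 (-v) w = -det2 v w := by
  simp only [det2, Prod.fst_neg, Prod.snd_neg]
  ring

lemma det2_smul_left (r : ℝ) (v w : Pt) : det2 (r • v) w = r * det2 v w := by
  simp only [det2, Prod.smul_fst, Prod.smul_snd, smul_eq_mul]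
  ring

lemma det2_smul_right (r : ℝ) (v w : Pt) : det2 v (r • w) = r * det2 v w := by
  simp only [det2, Prod.smul_fst, Prod.smul_snd, smul_eq_mul]
  ring

lemma det2_add_right (u v w : Pt) : det2 u (v + w) = det2 u v + det2 u w := by
  simp only [det2, Prod.fst_add, Prod.snd_add]
  ring

lemma det2_smul_eq (u v w : Pt) : det2 v w • u = det2 u w • v + det2 v u • w := by
  ext <;>
    simp only [det2, Prod.smul_fst, Prod.smul_snd, Prod.fst_add, Prod.snd_add, smul_eq_mul] <;>
    ring

lemma det2_mul_det2 (w x c d : Pt) :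
    det2 w x * det2 c d = det2 w c * det2 x d - det2 w d * det2 x c := by
  simp only [det2]
  ring

lemma exists_eq_smul_of_det2_eq_zero (hw : w ≠ 0) (h : det2 w v = 0) : ∃ r : ℝ, v = r • w := by
  have hpos : 0 < w.1 ^ 2 + w.2 ^ 2 := by
    by_contra! hle
    exact hw (Prod.ext (by simp only [Prod.fst_zero]; nlinarith)
      (by simp only [Prod.snd_zero]; nlinarith))
  simp only [det2] at h
  refine ⟨(w.1 * v.1 + w.2 * v.2) / (w.1 ^ 2 + w.2 ^ 2), Prod.ext ?_ ?_⟩ <;>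
    simp only [Prod.smul_fst, Prod.smul_snd, smul_eq_mul] <;> field_simp
  · linear_combination (-w.2) * h
  · linear_combination w.1 * h

lemma collinear_iff_det2 : Collinear ℝ {a, b, c} ↔ det2 (b - a) (c - a) = 0 := by
  refine ⟨fun h => ?_, fun h => ?_⟩
  · obtain ⟨v, hv⟩ := (collinear_iff_of_mem (p₀ := a) (by simp)).1 h
    obtain ⟨r, hr⟩ := hv b (by simp)
    obtain ⟨s, hs⟩ := hv c (by simp)
    rw [hr, hs, vadd_eq_add, vadd_eq_add, add_sub_cancel_right, add_sub_cancel_right,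
      det2_smul_left, det2_smul_right, det2_self, mul_zero, mul_zero]
  · rcases eq_or_ne b a with rfl | hne
    · simpa using collinear_pair ℝ b c
    obtain ⟨r, hr⟩ := exists_eq_smul_of_det2_eq_zero (sub_ne_zero.2 hne) h
    refine (collinear_iff_of_mem (p₀ := a) (by simp)).2 ⟨b - a, ?_⟩
    rintro p (rfl | rfl | rfl)
    · exact ⟨0, by simp⟩
    · exact ⟨1, by simp⟩
    · exact ⟨r, by simp [← hr]⟩

/-- The affine form `x ↦ det (w, x - o)`, positive on the left of the line through `o` with
direction `w`. -/
def sideForm (o w : Pt) : Pt →ᵃ[ℝ] ℝ where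
  toFun x := det2 w (x - o)
  linear := w.1 • LinearMap.snd ℝ ℝ ℝ - w.2 • LinearMap.fst ℝ ℝ ℝ
  map_vadd' p v := by
    simp only [det2, vadd_eq_add, Prod.fst_sub, Prod.snd_sub, Prod.fst_add, Prod.snd_add,
      LinearMap.sub_apply, LinearMap.smul_apply, LinearMap.snd_apply, LinearMap.fst_apply,
      smul_eq_mul]
    ring

lemma sideForm_apply (o w x : Pt) : sideForm o w x = det2 w (x - o) := rfl

/-- The `a`-coordinate in the affine frame with origin `o` and unit points `a` and `b`. It is
meaningful only when `o`, `a`, `b` are not collinear. -/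
noncomputable def frameCoord (o a b : Pt) : Pt →ᵃ[ℝ] ℝ :=
  (det2 (b - o) (a - o))⁻¹ • sideForm o (b - o)

lemma frameCoord_apply (o a b x : Pt) :
    frameCoord o a b x = det2 (b - o) (x - o) / det2 (b - o) (a - o) := by
  rw [div_eq_inv_mul]
  rfl

lemma frameCoord_origin (o a b : Pt) : frameCoord o a b o = 0 := by
  simp [frameCoord_apply, det2]

lemma frameCoord_left (h : det2 (a - o) (b - o) ≠ 0) : frameCoord o a b a = 1 := by
  rw [frameCoord_apply, div_self (by rwa [det2_swap, neg_ne_zero])]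

lemma frameCoord_right (o a b : Pt) : frameCoord o a b b = 0 := by
  rw [frameCoord_apply, det2_self, zero_div]

lemma sub_eq_frameCoord (h : det2 (a - o) (b - o) ≠ 0) (x : Pt) :
    x - o = frameCoord o a b x • (a - o) + frameCoord o b a x • (b - o) := by
  have hx := det2_smul_eq (x - o) (a - o) (b - o)
  rw [frameCoord_apply, frameCoord_apply, det2_swap (b - o), det2_swap (b - o) (a - o),
    neg_div_neg_eq, div_eq_inv_mul, div_eq_inv_mul, mul_smul, mul_smul, ← smul_add, ← hx,
    inv_smul_smul₀ h]

lemma mem_segment_of_frameCoord_add_eq_one (h : det2 (a - o) (b - o) ≠ 0)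
    (ha : 0 ≤ frameCoord o a b x) (hb : 0 ≤ frameCoord o b a x)
    (hab : frameCoord o a b x + frameCoord o b a x = 1) : x ∈ segment ℝ a b := by
  refine ⟨_, _, ha, hb, hab, ?_⟩
  have hx := sub_eq_frameCoord h x
  have ho : o = frameCoord o a b x • o + frameCoord o b a x • o := by rw [← add_smul, hab, one_smul]
  linear_combination (norm := module) -hx - ho

lemma frameCoord_add_eq_one_of_mem_segment (h : det2 (a - o) (b - o) ≠ 0)
    (hx : x ∈ segment ℝ a b) : frameCoord o a b x + frameCoord o b a x = 1 := by
  have h' : det2 (b - o) (a - o) ≠ 0 := by rwa [det2_swap, neg_ne_zero]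
  obtain ⟨t, -, -, hf⟩ := exists_apply_eq_of_mem_segment hx
  simp only [hf, frameCoord_left h, frameCoord_left h', frameCoord_right]
  ring

lemma frameCoord_pos_of_mem_openSegment (h : det2 (a - o) (b - o) ≠ 0)
    (hx : x ∈ openSegment ℝ a b) : 0 < frameCoord o a b x := by
  obtain ⟨t, -, ht1, hf⟩ := exists_apply_eq_of_mem_openSegment hx
  rw [hf, frameCoord_left h, frameCoord_right]
  linarith

lemma mem_segment_of_frameCoord_eq_zero (h : det2 (a - o) (b - o) ≠ 0)
    (ha : frameCoord o a b x ∈ Icc 0 1) (hb : frameCoord o b a x = 0) : x ∈ segment ℝ o a := by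
  rw [segment_eq_image_lineMap]
  refine ⟨_, ha, ?_⟩
  rw [AffineMap.lineMap_apply_module', ← eq_sub_iff_add_eq, sub_eq_frameCoord h x, hb, zero_smul,
    add_zero]

end Plane

section FirstHit

variable {E : Type*} [NormedAddCommGroup E] [NormedSpace ℝ E] {K : Set E} {o y : E}

lemma exists_first_mem_segment (hK : IsClosed K) (ho : o ∉ K) (hy : y ∈ K) :
    ∃ z ∈ segment ℝ o y, z ∈ K ∧ ∀ x ∈ openSegment ℝ o z, x ∉ K := by
  have hne : (segment ℝ o y ∩ K).Nonempty := ⟨y, right_mem_segment ℝ o y, hy⟩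
  have hcomp : IsCompact (segment ℝ o y ∩ K) := by
    rw [segment_eq_image_lineMap]
    exact (isCompact_Icc.image AffineMap.lineMap_continuous).inter_right hK
  obtain ⟨z, ⟨hz, hzK⟩, hmin⟩ := hcomp.exists_isMinOn hne (continuous_dist.comp
    (Continuous.prodMk_right o)).continuousOn
  refine ⟨z, hz, hzK, fun x hx hxK => ?_⟩
  have hxy : x ∈ segment ℝ o y :=
    (convex_segment o y).segment_subset (left_mem_segment ℝ o y) hz
      (openSegment_subset_segment ℝ o z hx)
  have hle : dist o z ≤ dist o x := hmin ⟨hxy, hxK⟩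
  rw [openSegment_eq_image_lineMap] at hx
  obtain ⟨t, ⟨ht0, ht1⟩, rfl⟩ := hx
  rw [dist_left_lineMap, Real.norm_of_nonneg ht0.le] at hle
  nlinarith [dist_pos.2 (ne_of_mem_of_not_mem hzK ho).symm]

end FirstHit

section Triangulations

variable {P : Finset Pt} {T : Set (Sym2 Pt)} {a b c d o p q u v x y z : Pt}

lemma Crosses.symm (h : Crosses a b c d) : Crosses c d a b :=
  let ⟨x, hab, hcd, hx⟩ := h
  ⟨x, hcd, hab, fun h => hx h.symm⟩

lemma Crosses.congr_left {a' b' : Pt} (h : Crosses a b c d) (hab : s(a, b) = s(a', b')) :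
    Crosses a' b' c d := by
  rcases Sym2.eq_iff.1 hab with ⟨rfl, rfl⟩ | ⟨rfl, rfl⟩
  · exact h
  · simpa only [Crosses, segment_symm ℝ b a, or_comm (a := _ = b)] using h

namespace ValidSegs

lemma mem_and_ne (hT : ValidSegs P T) (h : s(a, b) ∈ T) : a ∈ P ∧ b ∈ P ∧ a ≠ b := by
  obtain ⟨p, q, hp, hq, hpq, he⟩ := hT.1 _ h
  rcases Sym2.eq_iff.1 he with ⟨rfl, rfl⟩ | ⟨rfl, rfl⟩
  exacts [⟨hp, hq, hpq⟩, ⟨hq, hp, hpq.symm⟩]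

lemma isEndpoint_of_mem_segment (hT : ValidSegs P T) (hab : s(a, b) ∈ T) (hcd : s(c, d) ∈ T)
    (hne : s(a, b) ≠ s(c, d)) (hx : x ∈ segment ℝ a b) (hx' : x ∈ segment ℝ c d) :
    (x = a ∨ x = b) ∧ (x = c ∨ x = d) :=
  not_not.1 fun h => hT.2 a b c d hab hcd hne ⟨x, hx, hx', h⟩

lemma eq_of_mem_openSegment (hT : ValidSegs P T) (hab : s(a, b) ∈ T) (hcd : s(c, d) ∈ T)
    (hx : x ∈ openSegment ℝ a b) (hx' : x ∈ segment ℝ c d) : s(a, b) = s(c, d) := by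
  by_contra hne
  have hab' := (hT.mem_and_ne hab).2.2
  rcases (hT.isEndpoint_of_mem_segment hab hcd hne (openSegment_subset_segment ℝ a b hx) hx').1
    with rfl | rfl
  · exact hab' (left_mem_openSegment_iff.1 hx)
  · exact hab' (right_mem_openSegment_iff.1 hx)

lemma eq_or_eq_of_mem_segment (hT : ValidSegs P T) (hod : s(o, d) ∈ T) (huv : s(u, v) ∈ T)
    (hd : d ∈ segment ℝ u v) : d = u ∨ d = v := by
  by_cases hne : s(o, d) = s(u, v)
  · exact Sym2.mem_iff.1 (hne ▸ Sym2.mem_mk_right o d)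
  · exact (hT.isEndpoint_of_mem_segment hod huv hne (right_mem_segment ℝ o d) hd).2

end ValidSegs

lemma isTriangulation_iff :
    IsTriangulation P T ↔ ValidSegs P T ∧ ∀ p ∈ P, ∀ q ∈ P, p ≠ q → s(p, q) ∉ T →
      ∃ u v, s(u, v) ∈ T ∧ Crosses p q u v := by
  refine and_congr_right fun hT => ⟨fun hmax p hp q hq hpq hpqT => ?_, fun h T' hT' hTT' => ?_⟩
  · by_contra! hcross
    refine hpqT (hmax (insert s(p, q) T) ⟨?_, ?_⟩ (subset_insert _ _) ▸ mem_insert _ _)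
    · rintro e (rfl | he)
      exacts [⟨p, q, hp, hq, hpq, rfl⟩, hT.1 e he]
    · rintro a b c d (hab | hab) (hcd | hcd) hne hx
      · exact hne (hab.trans hcd.symm)
      · exact hcross c d hcd (hx.congr_left hab)
      · exact hcross a b hab (hx.symm.congr_left hcd)
      · exact hT.2 a b c d hab hcd hne hx
  · refine Subset.antisymm (fun e he => ?_) hTT'
    obtain ⟨p, q, hp, hq, hpq, rfl⟩ := hT'.1 e he
    by_contra heT
    obtain ⟨u, v, huv, hx⟩ := h p hp q hq hpq heT
    exact hT'.2 p q u v he (hTT' huv) (fun h => heT (h ▸ huv)) hx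

lemma exists_crosses_of_notMem (hT : IsTriangulation P T) (hp : p ∈ P) (hq : q ∈ P) (hpq : p ≠ q)
    (h : s(p, q) ∉ T) : ∃ u v, s(u, v) ∈ T ∧ Crosses p q u v :=
  (isTriangulation_iff.1 hT).2 p hp q hq hpq h

/-- The part of the plane drawn by `P` and `T`: the points of `P` and the segments of `T`. -/
def skeleton (P : Finset Pt) (T : Set (Sym2 Pt)) : Set Pt :=
  {x | x ∈ P ∨ ∃ u v, s(u, v) ∈ T ∧ x ∈ segment ℝ u v}

/-- The part of the skeleton that can hide points from `o`: the points of `P` other than `o` and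
the segments of `T` not ending at `o`. -/
def obstacles (P : Finset Pt) (T : Set (Sym2 Pt)) (o : Pt) : Set Pt :=
  {x | (x ∈ P ∧ x ≠ o) ∨ ∃ u v, s(u, v) ∈ T ∧ u ≠ o ∧ v ≠ o ∧ x ∈ segment ℝ u v}

/-- `o` lies in the relative interior of no segment of `T`. -/
def OffEdges (T : Set (Sym2 Pt)) (o : Pt) : Prop :=
  ∀ u v, s(u, v) ∈ T → o ∉ openSegment ℝ u v

/-- The segment `[u, v]` of `T` is the first part of the skeleton met by the ray from `o` through
`z`, and it is met transversally at the point `z` of its relative interior. -/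
structure Blocks (P : Finset Pt) (T : Set (Sym2 Pt)) (o u v z : Pt) : Prop where
  mem : s(u, v) ∈ T
  mem_openSegment : z ∈ openSegment ℝ u v
  not_collinear : ¬Collinear ℝ {o, u, v}
  disjoint : Disjoint (openSegment ℝ o z) (skeleton P T)

lemma isClosed_obstacles (hT : ValidSegs P T) (o : Pt) : IsClosed (obstacles P T o) := by
  have heq : obstacles P T o = ((P.erase o : Finset Pt) : Set Pt) ∪
      ⋃ e ∈ {e : Pt × Pt | s(e.1, e.2) ∈ T ∧ e.1 ≠ o ∧ e.2 ≠ o}, segment ℝ e.1 e.2 := by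
    ext x
    simp only [obstacles, mem_ofPred_eq, mem_union, Finset.mem_coe, Finset.mem_erase, mem_iUnion,
      exists_prop, and_comm (a := x ∈ P)]
    exact or_congr_right ⟨fun ⟨u, v, huv, hu, hv, hx⟩ => ⟨(u, v), ⟨huv, hu, hv⟩, hx⟩,
      fun ⟨e, ⟨he, hu, hv⟩, hx⟩ => ⟨e.1, e.2, he, hu, hv, hx⟩⟩
  rw [heq]
  refine (Finset.finite_toSet _).isClosed.union (Finite.isClosed_biUnion ?_ fun e _ => ?_)
  · refine ((P ×ˢ P).finite_toSet).subset fun e he => ?_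
    obtain ⟨h1, h2, -⟩ := hT.mem_and_ne he.1
    exact Finset.mem_coe.2 (Finset.mem_product.2 ⟨h1, h2⟩)
  · rw [segment_eq_image_lineMap]
    exact (isCompact_Icc.image AffineMap.lineMap_continuous).isClosed

lemma OffEdges.eq_or_eq (h : OffEdges T o) (huv : s(u, v) ∈ T) (ho : o ∈ segment ℝ u v) :
    o = u ∨ o = v :=
  eq_or_eq_of_mem_segment_of_notMem ho (h u v huv)

lemma exists_first_mem_skeleton (hT : ValidSegs P T) (hoff : OffEdges T o)
    (hyo : y ≠ o) (hy : y ∈ skeleton P T)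
    (hray : ∀ q, s(o, q) ∈ T → ¬SameRay ℝ (y - o) (q - o)) :
    ∃ z ∈ segment ℝ o y, z ≠ o ∧ z ∈ skeleton P T ∧
      Disjoint (openSegment ℝ o z) (skeleton P T) := by
  have hself : ∀ q, s(o, q) ∈ T → ∀ x ∈ segment ℝ o q, x ≠ o → ¬SameRay ℝ (y - o) (x - o) :=
    fun q hq x hx hxo h => hray q hq
      (h.trans (sameRay_sub_of_mem_segment hx) fun h0 => absurd (sub_eq_zero.1 h0) hxo)
  have hobst : ∀ x ∈ skeleton P T, x ≠ o → SameRay ℝ (y - o) (x - o) → x ∈ obstacles P T o := by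
    rintro x (hxP | ⟨u, v, huv, hx⟩) hxo hs
    · exact Or.inl ⟨hxP, hxo⟩
    · refine Or.inr ⟨u, v, huv, ?_, ?_, hx⟩
      · rintro rfl
        exact hself v huv x hx hxo hs
      · rintro rfl
        exact hself u (Sym2.eq_swap ▸ huv) x (segment_symm ℝ u v ▸ hx) hxo hs
  have hoK : o ∉ obstacles P T o := by
    rintro (⟨-, h⟩ | ⟨u, v, huv, hu, hv, h⟩)
    · exact h rfl
    · rcases hoff.eq_or_eq huv h with h | h
      exacts [hu h.symm, hv h.symm]
  obtain ⟨z, hz, hzK, hfirst⟩ := exists_first_mem_segment (isClosed_obstacles hT o) hoK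
    (hobst y hy hyo SameRay.rfl)
  have hzo : z ≠ o := ne_of_mem_of_not_mem hzK hoK
  refine ⟨z, hz, hzo, ?_, disjoint_left.2 fun x hx hxs => hfirst x hx (hobst x hxs ?_ ?_)⟩
  · rcases hzK with ⟨h, -⟩ | ⟨u, v, huv, -, -, h⟩
    exacts [Or.inl h, Or.inr ⟨u, v, huv, h⟩]
  · rintro rfl
    exact hzo (left_mem_openSegment_iff.1 hx).symm
  · exact (sameRay_sub_of_mem_segment ((convex_segment o y).segment_subset
      (left_mem_segment ℝ o y) hz (openSegment_subset_segment ℝ o z hx))).symm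

lemma mem_openSegment_of_collinear (huv : u ≠ v) (hz : z ∈ openSegment ℝ u v)
    (ho : o ∉ segment ℝ u v) (h : Collinear ℝ {o, u, v}) :
    u ∈ openSegment ℝ o z ∨ v ∈ openSegment ℝ o z := by
  have hou : u ≠ o := fun h => ho (h ▸ left_mem_segment ℝ u v)
  have hov : v ≠ o := fun h => ho (h ▸ right_mem_segment ℝ u v)
  have hzu : u ≠ z := by
    rintro rfl
    exact huv (left_mem_openSegment_iff.1 hz)
  have hzv : v ≠ z := by
    rintro rfl
    exact huv (right_mem_openSegment_iff.1 hz)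
  have hw := mem_segment_iff_wbtw.1 (openSegment_subset_segment ℝ u v hz)
  rcases h.wbtw_or_wbtw_or_wbtw with h | h | h
  · exact Or.inl (mem_openSegment_of_ne_left_right hou.symm hzu.symm
      (mem_segment_iff_wbtw.2 (h.trans_right_left hw)))
  · exact Or.inr (mem_openSegment_of_ne_left_right hov.symm hzv.symm
      (mem_segment_iff_wbtw.2 (h.symm.trans_right_left hw.symm)))
  · exact absurd (mem_segment_iff_wbtw.2 h.symm) ho

lemma exists_blocks_of_disjoint (hT : IsTriangulation P T) (ho : o ∈ P)
    (hoff : OffEdges T o) (hzo : z ≠ o) (hz : z ∈ skeleton P T)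
    (hdisj : Disjoint (openSegment ℝ o z) (skeleton P T)) : ∃ u v, Blocks P T o u v z := by
  by_contra! hnb
  have hmid : midpoint ℝ o z ∈ openSegment ℝ o z := midpoint_mem_openSegment o z
  have hends : ∀ u v, s(u, v) ∈ T → z ∈ segment ℝ u v → z = u ∨ z = v := by
    intro u v huv hzuv
    refine eq_or_eq_of_mem_segment_of_notMem hzuv fun hzo' => ?_
    refine hnb u v ⟨huv, hzo', fun hcol => ?_, hdisj⟩
    have ho' : o ∉ segment ℝ u v := fun h => disjoint_left.1 hdisj hmid
      (Or.inr ⟨u, v, huv, (convex_segment u v).segment_subset h hzuv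
        (openSegment_subset_segment ℝ o z hmid)⟩)
    obtain ⟨hu, hv, hne⟩ := hT.1.mem_and_ne huv
    rcases mem_openSegment_of_collinear hne hzo' ho' hcol with h | h
    exacts [disjoint_left.1 hdisj h (Or.inl hu), disjoint_left.1 hdisj h (Or.inl hv)]
  have hzP : z ∈ P := by
    rcases hz with h | ⟨u, v, huv, h⟩
    · exact h
    obtain ⟨hu, hv, -⟩ := hT.1.mem_and_ne huv
    rcases hends u v huv h with rfl | rfl
    exacts [hu, hv]
  have hozT : s(o, z) ∉ T := fun h => disjoint_left.1 hdisj hmid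
    (Or.inr ⟨o, z, h, openSegment_subset_segment ℝ o z hmid⟩)
  obtain ⟨u, v, huv, x, hxoz, hxuv, hx⟩ := exists_crosses_of_notMem hT ho hzP hzo.symm hozT
  by_cases hxo : x ∈ openSegment ℝ o z
  · exact disjoint_left.1 hdisj hxo (Or.inr ⟨u, v, huv, hxuv⟩)
  · refine hx ⟨eq_or_eq_of_mem_segment_of_notMem hxoz hxo, ?_⟩
    rcases eq_or_eq_of_mem_segment_of_notMem hxoz hxo with rfl | rfl
    exacts [hoff.eq_or_eq huv hxuv, hends u v huv hxuv]

lemma exists_blocks_of_forall_not_sameRay (hT : IsTriangulation P T) (ho : o ∈ P)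
    (hoff : OffEdges T o) (hyo : y ≠ o) (hy : y ∈ skeleton P T)
    (hray : ∀ q, s(o, q) ∈ T → ¬SameRay ℝ (y - o) (q - o)) :
    ∃ z ∈ segment ℝ o y, z ≠ o ∧ ∃ u v, Blocks P T o u v z := by
  obtain ⟨z, hz, hzo, hzs, hdisj⟩ := exists_first_mem_skeleton hT.1 hoff hyo hy hray
  exact ⟨z, hz, hzo, exists_blocks_of_disjoint hT ho hoff hzo hzs hdisj⟩

end Triangulations

section Triangulations

variable {P : Finset Pt} {T : Set (Sym2 Pt)} {a b e f o p u v x y z : Pt}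

namespace Blocks

lemma det2_ne_zero (h : Blocks P T o u v z) : det2 (z - o) (u - o) ≠ 0 := by
  obtain ⟨t, ht, -, hf⟩ := exists_apply_eq_of_mem_openSegment h.mem_openSegment
  have hz := hf (sideForm o (u - o))
  rw [sideForm_apply, sideForm_apply, sideForm_apply, det2_self, mul_zero, zero_add] at hz
  rw [det2_swap, hz, neg_ne_zero]
  exact mul_ne_zero ht.ne' fun h0 => h.not_collinear (collinear_iff_det2.2 h0)

lemma frameCoord_add_eq_one (h : Blocks P T o u v z) (hx : x ∈ segment ℝ u v) :
    frameCoord o z u x + frameCoord o u z x = 1 := by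
  obtain ⟨s, hs, -, hf⟩ := exists_apply_eq_of_mem_openSegment h.mem_openSegment
  obtain ⟨t, -, -, hg⟩ := exists_apply_eq_of_mem_segment hx
  have hz := hf (frameCoord o z u + frameCoord o u z)
  have hx := hg (frameCoord o z u + frameCoord o u z)
  have hD : det2 (u - o) (z - o) ≠ 0 := by rw [det2_swap, neg_ne_zero]; exact h.det2_ne_zero
  simp only [AffineMap.coe_add, Pi.add_apply, frameCoord_left h.det2_ne_zero, frameCoord_left hD,
    frameCoord_right] at hz hx
  have hv : frameCoord o z u v + frameCoord o u z v = 1 := by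
    refine mul_left_cancel₀ hs.ne' ?_
    linarith
  rw [hx, hv]
  ring

lemma mem_openSegment_of_frameCoord (h : Blocks P T o u v z) (hX : 0 < frameCoord o z u x)
    (hY : 0 ≤ frameCoord o u z x) (hXY : frameCoord o z u x + frameCoord o u z x = 1) :
    x ∈ openSegment ℝ u v := by
  have hx : x ∈ segment ℝ u v :=
    (convex_segment u v).segment_subset (openSegment_subset_segment ℝ u v h.mem_openSegment)
      (left_mem_segment ℝ u v)
      (mem_segment_of_frameCoord_add_eq_one h.det2_ne_zero hX.le hY hXY)
  refine mem_openSegment_of_ne_left_right ?_ ?_ hx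
  · rintro rfl
    exact hX.ne' (frameCoord_right ..)
  · rintro rfl
    obtain ⟨t, -, ht1, hf⟩ := exists_apply_eq_of_mem_openSegment h.mem_openSegment
    have hz := hf (frameCoord o z u)
    rw [frameCoord_left h.det2_ne_zero, frameCoord_right, mul_zero, zero_add] at hz
    nlinarith

lemma frameCoord_add_ne_one (hT : ValidSegs P T) (h : Blocks P T o u v z) (hef : s(e, f) ∈ T)
    (hne : s(u, v) ≠ s(e, f)) (hy : y ∈ segment ℝ e f) (hX : 0 < frameCoord o z u y)
    (hY : 0 ≤ frameCoord o u z y) : frameCoord o z u y + frameCoord o u z y ≠ 1 := fun hXY =>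
  hne (hT.eq_of_mem_openSegment h.mem hef (h.mem_openSegment_of_frameCoord hX hY hXY) hy)

lemma frameCoord_ne_zero (h : Blocks P T o u v z) (hef : s(e, f) ∈ T) (hy : y ∈ segment ℝ e f)
    (hX : frameCoord o z u y ∈ Ioo 0 1) : frameCoord o u z y ≠ 0 := by
  refine fun hY => disjoint_left.1 h.disjoint (mem_openSegment_of_ne_left_right ?_ ?_
    (mem_segment_of_frameCoord_eq_zero h.det2_ne_zero (Ioo_subset_Icc_self hX) hY))
    (Or.inr ⟨e, f, hef, hy⟩)
  · rintro rfl
    exact hX.1.ne' (frameCoord_origin ..)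
  · rintro rfl
    exact hX.2.ne (frameCoord_left h.det2_ne_zero)

/-- A segment of `T` passing through the triangle `o z u` cannot leave it through `[z, u]`, which is
part of a segment of `T`, nor through `[o, z]`, which is free, so it must end inside. -/
lemma endpoint_mem_triangle (hT : ValidSegs P T) (h : Blocks P T o u v z) (hef : s(e, f) ∈ T)
    (hx : x ∈ segment ℝ e f) (hX : 0 ≤ frameCoord o z u x) (hY : 0 < frameCoord o u z x)
    (hXY : frameCoord o z u x + frameCoord o u z x < 1)
    (hf : frameCoord o z u x * frameCoord o u z f < frameCoord o u z x * frameCoord o z u f) :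
    0 < frameCoord o u z f ∧ frameCoord o z u f + frameCoord o u z f < 1 := by
  set X := frameCoord o z u
  set Y := frameCoord o u z
  have hne : s(u, v) ≠ s(e, f) := fun heq => hXY.ne (h.frameCoord_add_eq_one (by
    rcases Sym2.eq_iff.1 heq with ⟨rfl, rfl⟩ | ⟨rfl, rfl⟩
    exacts [hx, segment_symm ℝ u v ▸ hx]))
  have hsub : segment ℝ x f ⊆ segment ℝ e f :=
    (convex_segment e f).segment_subset hx (right_mem_segment ℝ e f)
  have hXpos : ∀ y ∈ segment ℝ x f, y ≠ x → 0 ≤ Y y → 0 < X y := fun y hy hyx hYy =>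
    pos_of_mul_pos_right
      ((mul_nonneg hX hYy).trans_lt (mul_apply_lt_of_mem_segment hf hy hyx)) hY.le
  have hfar : ∀ y ∈ segment ℝ x f, 0 ≤ Y y → X y + Y y < 1 := by
    intro y hy hYy
    by_contra! hle
    obtain ⟨m, hm, hm1⟩ := exists_mem_segment_apply_eq (X + Y) hXY.le hle
    have hmf := (convex_segment x f).segment_subset (left_mem_segment ℝ x f) hy hm
    obtain ⟨t, ht0, ht1, ht⟩ := exists_apply_eq_of_mem_segment hm
    have hYm : 0 ≤ Y m := by
      rw [ht Y]
      nlinarith [mul_nonneg (sub_nonneg.2 ht1) hY.le, mul_nonneg ht0 hYy]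
    exact h.frameCoord_add_ne_one hT hef hne (hsub hmf)
      (hXpos m hmf (fun h => hXY.ne (h ▸ hm1)) hYm) hYm hm1
  have hYf : 0 < Y f := by
    by_contra! hle
    obtain ⟨m, hm, hm0⟩ := exists_mem_segment_apply_eq (-Y) (t := 0) (neg_nonpos.2 hY.le)
      (neg_nonneg.2 hle)
    have hYm : Y m = 0 := neg_eq_zero.1 hm0
    exact h.frameCoord_ne_zero hef (hsub hm)
      ⟨hXpos m hm (fun h => hY.ne' (h ▸ hYm)) hYm.ge, by simpa [hYm] using hfar m hm hYm.ge⟩ hYm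
  exact ⟨hYf, hfar f (right_mem_segment ℝ x f) hYf.le⟩

end Blocks

lemma exists_endpoint_neg (g : Pt →ᵃ[ℝ] ℝ) (hx : x ∈ openSegment ℝ a b) (hgx : g x = 0)
    (h : g a ≠ 0 ∨ g b ≠ 0) : g a < 0 ∨ g b < 0 := by
  obtain ⟨t, ht0, ht1, ht⟩ := exists_apply_eq_of_mem_openSegment hx
  have hg := ht g
  by_contra! hle
  rw [hgx] at hg
  have h1 := mul_nonneg (sub_nonneg.2 ht1.le) hle.1
  have h2 := mul_nonneg ht0.le hle.2
  rcases h with h | h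
  · exact h ((mul_eq_zero.1 (by linarith : (1 - t) * g a = 0)).resolve_left (by linarith))
  · exact h ((mul_eq_zero.1 (by linarith : t * g b = 0)).resolve_left ht0.ne')

lemma Blocks.symm (h : Blocks P T o u v z) : Blocks P T o v u z where
  mem := Sym2.eq_swap ▸ h.mem
  mem_openSegment := openSegment_symm ℝ u v ▸ h.mem_openSegment
  not_collinear := by rw [pair_comm]; exact h.not_collinear
  disjoint := h.disjoint

lemma eq_smul_of_frameCoord_mul_eq (h : det2 (a - o) (b - o) ≠ 0) (hp : frameCoord o b a p ≠ 0)
    (heq : frameCoord o a b p * frameCoord o b a x = frameCoord o b a p * frameCoord o a b x) :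
    x - o = (frameCoord o b a x / frameCoord o b a p) • (p - o) := by
  rw [sub_eq_frameCoord h x, sub_eq_frameCoord h p, smul_add, smul_smul, smul_smul,
    div_mul_cancel₀ _ hp, div_mul_eq_mul_div, mul_comm _ (frameCoord o a b p), heq,
    mul_div_cancel_left₀ _ hp]

lemma Blocks.exists_endpoint_of_blocks (hT : ValidSegs P T) (h : Blocks P T o u v z)
    (hb : Blocks P T o e f x) (hX : 0 ≤ frameCoord o z u x) (hY : 0 < frameCoord o u z x)
    (hXY : frameCoord o z u x + frameCoord o u z x < 1) :
    ∃ p ∈ P, 0 < frameCoord o u z p ∧ frameCoord o z u p + frameCoord o u z p < 1 ∧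
      frameCoord o z u x * frameCoord o u z p < frameCoord o u z x * frameCoord o z u p := by
  set X := frameCoord o z u
  set Y := frameCoord o u z
  obtain ⟨he, hf, -⟩ := hT.mem_and_ne hb.mem
  have hx := openSegment_subset_segment ℝ e f hb.mem_openSegment
  have hne : (X x • Y - Y x • X) e ≠ 0 ∨ (X x • Y - Y x • X) f ≠ 0 := by
    by_contra! h0
    refine hb.not_collinear (collinear_iff_det2.2 ?_)
    rw [eq_smul_of_frameCoord_mul_eq h.det2_ne_zero hY.ne' (sub_eq_zero.1 h0.1),
      eq_smul_of_frameCoord_mul_eq h.det2_ne_zero hY.ne' (sub_eq_zero.1 h0.2),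
      det2_smul_left, det2_smul_right, det2_self, mul_zero, mul_zero]
  have hx0 : (X x • Y - Y x • X) x = 0 := sub_eq_zero.2 (mul_comm _ _)
  rcases exists_endpoint_neg _ hb.mem_openSegment hx0 hne with hneg | hneg
  · have hlt := sub_neg.1 hneg
    obtain ⟨h1, h2⟩ :=
      h.endpoint_mem_triangle hT hb.symm.mem (segment_symm ℝ e f ▸ hx) hX hY hXY hlt
    exact ⟨e, he, h1, h2, hlt⟩
  · have hlt := sub_neg.1 hneg
    obtain ⟨h1, h2⟩ := h.endpoint_mem_triangle hT hb.mem hx hX hY hXY hlt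
    exact ⟨f, hf, h1, h2, hlt⟩

lemma Blocks.ne_of_blocks (hT : ValidSegs P T) (h : Blocks P T o u v z)
    (hb : Blocks P T o e f x) : x ≠ u := by
  intro hxu
  have hx := hxu ▸ hb.mem_openSegment
  have huv : u ∈ openSegment ℝ u v := by
    rcases Sym2.eq_iff.1 (hT.eq_of_mem_openSegment hb.mem h.mem hx (left_mem_segment ℝ u v)) with
      ⟨rfl, rfl⟩ | ⟨rfl, rfl⟩
    exacts [hx, openSegment_symm ℝ e f ▸ hx]
  exact (hT.mem_and_ne h.mem).2.2 (left_mem_openSegment_iff.1 huv)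

lemma Blocks.exists_angularly_closer (hT : ValidSegs P T) (h : Blocks P T o u v z)
    (hXp : 0 ≤ frameCoord o z u p) (hYp : 0 < frameCoord o u z p)
    (hp : p = u ∨ frameCoord o z u p + frameCoord o u z p < 1) (hx : x ∈ segment ℝ o p)
    (hxo : x ≠ o) (hb : Blocks P T o e f x) :
    ∃ q ∈ P, 0 < frameCoord o u z q ∧ frameCoord o z u q + frameCoord o u z q < 1 ∧
      frameCoord o z u p * frameCoord o u z q < frameCoord o u z p * frameCoord o z u q := by
  have hxu := h.ne_of_blocks hT hb
  obtain ⟨t, ht, ht1, rfl⟩ := exists_lineMap_eq_of_mem_segment hx hxo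
  have hX : frameCoord o z u (AffineMap.lineMap o p t) = t * frameCoord o z u p := by
    rw [AffineMap.apply_lineMap, AffineMap.lineMap_apply_ring', frameCoord_origin, sub_zero,
      add_zero]
  have hY : frameCoord o u z (AffineMap.lineMap o p t) = t * frameCoord o u z p := by
    rw [AffineMap.apply_lineMap, AffineMap.lineMap_apply_ring', frameCoord_origin, sub_zero,
      add_zero]
  have hXY : t * frameCoord o z u p + t * frameCoord o u z p < 1 := by
    rw [← mul_add]
    rcases hp with rfl | hlt
    · have ht1 : t < 1 := ht1.lt_of_ne fun h1 => hxu (by rw [h1, AffineMap.lineMap_apply_one])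
      rwa [h.frameCoord_add_eq_one (left_mem_segment ℝ p v), mul_one]
    · nlinarith
  obtain ⟨q, hq, hYq, hXYq, hlt⟩ := h.exists_endpoint_of_blocks hT hb (by rw [hX]; positivity)
    (by rw [hY]; positivity) (by rwa [hX, hY])
  rw [hX, hY, mul_assoc, mul_assoc] at hlt
  exact ⟨q, hq, hYq, hXYq, lt_of_mul_lt_mul_left hlt ht.le⟩

/-- Among the points of `P` in the triangle `o z u`, the one closest in angle to the ray through `z`
cannot be hidden from `o`: the segment hiding it would have an endpoint closer still. -/
lemma Blocks.exists_neighbor (hT : IsTriangulation P T) (ho : o ∈ P) (hoff : OffEdges T o)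
    (h : Blocks P T o u v z) :
    ∃ q, s(o, q) ∈ T ∧ ∃ α β : ℝ, 0 ≤ α ∧ 0 < β ∧ q - o = α • (z - o) + β • (u - o) := by
  set X := frameCoord o z u
  set Y := frameCoord o u z
  classical
  set C := P.filter fun p => 0 ≤ X p ∧ 0 < Y p ∧ (p = u ∨ X p + Y p < 1)
  have hD : det2 (u - o) (z - o) ≠ 0 := by
    rw [det2_swap, neg_ne_zero]
    exact h.det2_ne_zero
  have hXu : X u = 0 := frameCoord_right o z u
  have hYu : Y u = 1 := frameCoord_left hD
  have huC : u ∈ C := Finset.mem_filter.2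
    ⟨(hT.1.mem_and_ne h.mem).1, hXu.ge, hYu ▸ one_pos, Or.inl rfl⟩
  obtain ⟨p, hpC, hmax⟩ := C.exists_max_image (fun p => X p / Y p) ⟨u, huC⟩
  obtain ⟨hpP, hXp, hYp, hp⟩ := Finset.mem_filter.1 hpC
  have hpo : p ≠ o := by
    rintro rfl
    exact hYp.ne' (frameCoord_origin ..)
  by_cases! hray : ∃ q, s(o, q) ∈ T ∧ SameRay ℝ (p - o) (q - o)
  · obtain ⟨q, hq, hray⟩ := hray
    have hqo := (hT.1.mem_and_ne hq).2.2.symm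
    obtain ⟨r, hr, hrq⟩ := hray.exists_pos_left (sub_ne_zero.2 hpo) (sub_ne_zero.2 hqo)
    refine ⟨q, hq, r * X p, r * Y p, by positivity, by positivity, ?_⟩
    rw [← hrq, mul_smul, mul_smul, ← smul_add, ← sub_eq_frameCoord h.det2_ne_zero]
  obtain ⟨x, hx, hxo, e, f, hb⟩ :=
    exists_blocks_of_forall_not_sameRay hT ho hoff hpo (Or.inl hpP) hray
  obtain ⟨q, hqP, hYq, hXYq, hlt⟩ :=
    h.exists_angularly_closer hT.1 hXp hYp hp hx hxo hb
  have hXq : 0 ≤ X q :=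
    (pos_of_mul_pos_right ((mul_nonneg hXp hYq.le).trans_lt hlt) hYp.le).le
  have hle := hmax q (Finset.mem_filter.2 ⟨hqP, hXq, hYq, Or.inr hXYq⟩)
  rw [div_le_div_iff₀ hYq hYp, mul_comm (X q)] at hle
  exact absurd hlt hle.not_gt

end Triangulations

section Cones

variable {P : Finset Pt} {T : Set (Sym2 Pt)} {c d m n o p u v w x y : Pt}

lemma exists_neighbor_mem_cone (hT : IsTriangulation P T) (ho : o ∈ P) (hoff : OffEdges T o)
    (C : ConvexCone ℝ Pt) {R : Set Pt} (hRC : ∀ x ∈ R, x - o ∈ C)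
    (hstar : ∀ y ∈ R, ∀ x ∈ segment ℝ o y, x ≠ o → x ∈ R)
    (hedge : ∀ u v, s(u, v) ∈ T → ∀ x ∈ R, x ∈ segment ℝ u v → u - o ∈ C ∨ v - o ∈ C)
    (hy : y ∈ R) (hyo : y ≠ o) (hyS : y ∈ skeleton P T) : ∃ q, s(o, q) ∈ T ∧ q - o ∈ C := by
  by_cases! hray : ∃ q, s(o, q) ∈ T ∧ SameRay ℝ (y - o) (q - o)
  · obtain ⟨q, hq, hray⟩ := hray
    have hqo := (hT.1.mem_and_ne hq).2.2.symm
    obtain ⟨r, hr, hrq⟩ := hray.exists_pos_left (sub_ne_zero.2 hyo) (sub_ne_zero.2 hqo)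
    exact ⟨q, hq, hrq ▸ C.smul_mem hr (hRC y hy)⟩
  obtain ⟨z, hz, hzo, u, v, hb⟩ := exists_blocks_of_forall_not_sameRay hT ho hoff hyo hyS hray
  have hzR := hstar y hy z hz hzo
  obtain ⟨u', v', hb', hu'⟩ : ∃ u' v', Blocks P T o u' v' z ∧ u' - o ∈ C := by
    rcases hedge u v hb.mem z hzR (openSegment_subset_segment ℝ u v hb.mem_openSegment) with h | h
    exacts [⟨u, v, hb, h⟩, ⟨v, u, hb.symm, h⟩]
  obtain ⟨q, hq, α, β, hα, hβ, heq⟩ := hb'.exists_neighbor hT ho hoff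
  refine ⟨q, hq, heq ▸ ?_⟩
  rcases hα.eq_or_lt with rfl | hα
  · simpa only [zero_smul, zero_add] using C.smul_mem hβ hu'
  · exact C.add_mem (C.smul_mem hα (hRC z hzR)) (C.smul_mem hβ hu')

/-- The open half-plane to the left of the direction `w`. -/
def leftHalfPlane (w : Pt) : ConvexCone ℝ Pt where
  carrier := {v | 0 < det2 w v}
  smul_mem' r hr v hv := by
    rw [mem_ofPred_eq, det2_smul_right]
    exact mul_pos hr hv
  add_mem' u hu v hv := by
    rw [mem_ofPred_eq, det2_add_right]
    exact add_pos hu hv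

lemma mem_leftHalfPlane : v ∈ leftHalfPlane w ↔ 0 < det2 w v := Iff.rfl

lemma exists_neighbor_mem_leftHalfPlane (hT : IsTriangulation P T) (ho : o ∈ P)
    (hoff : OffEdges T o) (hp : p ∈ P) (hwp : 0 < det2 w (p - o)) :
    ∃ q, s(o, q) ∈ T ∧ 0 < det2 w (q - o) := by
  refine exists_neighbor_mem_cone hT ho hoff (leftHalfPlane w)
    (R := {x | 0 < sideForm o w x}) (fun x hx => hx) ?_ ?_ hwp ?_ (Or.inl hp)
  · intro y hy x hx hxo
    obtain ⟨t, ht, -, rfl⟩ := exists_lineMap_eq_of_mem_segment hx hxo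
    have hline := AffineMap.lineMap_vsub_left o y t
    rw [vsub_eq_sub, vsub_eq_sub] at hline
    rw [mem_ofPred_eq, sideForm_apply, hline, det2_smul_right]
    exact mul_pos ht hy
  · intro u v _ x hx hxuv
    by_contra! hle
    obtain ⟨t, ht0, ht1, hf⟩ := exists_apply_eq_of_mem_segment hxuv
    have hu : sideForm o w u ≤ 0 := not_lt.1 hle.1
    have hv : sideForm o w v ≤ 0 := not_lt.1 hle.2
    have hx' : 0 < sideForm o w x := hx
    rw [hf] at hx'
    nlinarith
  · rintro rfl
    simp [det2] at hwp

lemma exists_mem_segment_min_eq_zero (f g : Pt →ᵃ[ℝ] ℝ) (hfx : 0 ≤ f x) (hgx : 0 ≤ g x)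
    (hy : f y ≤ 0 ∨ g y ≤ 0) : ∃ m ∈ segment ℝ x y, min (f m) (g m) = 0 :=
  (convex_segment x y).isPreconnected.intermediate_value (right_mem_segment ℝ x y)
    (left_mem_segment ℝ x y) (f.continuous_of_finiteDimensional.min
      g.continuous_of_finiteDimensional).continuousOn ⟨min_le_iff.2 hy, le_min hfx hgx⟩

lemma ValidSegs.eq_of_mem_segment (hT : ValidSegs P T) (huv : s(u, v) ∈ T) (ho : o ∉ segment ℝ u v)
    (hd : s(o, d) ∈ T) (hm : m ∈ segment ℝ u v) (hm' : m ∈ segment ℝ o d) :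
    m = d ∧ (d = u ∨ d = v) := by
  have hne : s(u, v) ≠ s(o, d) := by
    intro h
    rcases Sym2.eq_iff.1 h with ⟨rfl, rfl⟩ | ⟨rfl, rfl⟩
    exacts [ho (left_mem_segment ℝ u v), ho (right_mem_segment ℝ u v)]
  obtain ⟨h1, h2⟩ := hT.isEndpoint_of_mem_segment huv hd hne hm hm'
  have hmd := h2.resolve_left fun h => ho (h ▸ hm)
  exact ⟨hmd, hmd ▸ h1⟩

lemma ValidSegs.eq_of_mem_legs (hT : ValidSegs P T) (hc : s(o, c) ∈ T) (hd : s(o, d) ∈ T)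
    (hD : det2 (c - o) (d - o) ≠ 0) (huv : s(u, v) ∈ T) (ho : o ∉ segment ℝ u v)
    (hm : m ∈ segment ℝ u v) (hn : n ∈ segment ℝ u v) (hx : x ∈ segment ℝ m n)
    (hXm : frameCoord o c d m = 0) (hYm : 0 ≤ frameCoord o d c m)
    (hYn : frameCoord o d c n = 0) (hXn : 0 ≤ frameCoord o c d n)
    (hXx : 0 < frameCoord o c d x) (hYx : 0 < frameCoord o d c x)
    (hXYx : frameCoord o c d x + frameCoord o d c x ≤ 1) : s(u, v) = s(c, d) := by
  have hD' : det2 (d - o) (c - o) ≠ 0 := by rwa [det2_swap, neg_ne_zero]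
  obtain ⟨t, ht0, ht1, hf⟩ := exists_apply_eq_of_mem_segment hx
  simp only [hf, hXm, hYn, mul_zero, zero_add, add_zero] at hXx hYx hXYx
  have hnc (h : frameCoord o c d n ≤ 1) : n = c ∧ (c = u ∨ c = v) :=
    hT.eq_of_mem_segment huv ho hc hn (mem_segment_of_frameCoord_eq_zero hD ⟨hXn, h⟩ hYn)
  have hmd (h : frameCoord o d c m ≤ 1) : m = d ∧ (d = u ∨ d = v) :=
    hT.eq_of_mem_segment huv ho hd hm (mem_segment_of_frameCoord_eq_zero hD' ⟨hYm, h⟩ hXm)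
  have hn1 (h : n = c) : frameCoord o c d n = 1 := by
    rw [h, frameCoord_left hD]
  have hm1 (h : m = d) : frameCoord o d c m = 1 := by
    rw [h, frameCoord_left hD']
  obtain ⟨hcuv, hduv⟩ : (c = u ∨ c = v) ∧ (d = u ∨ d = v) := by
    rcases le_or_gt (frameCoord o c d n) 1 with h | h
    · obtain ⟨hn', hcuv⟩ := hnc h
      exact ⟨hcuv, (hmd (by nlinarith [hn1 hn'])).2⟩
    · have h' : frameCoord o d c m ≤ 1 := by nlinarith
      exact absurd (hnc (by nlinarith [hm1 (hmd h').1])).1 fun h0 => h.ne' (hn1 h0)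
  have hcd : c ≠ d := by
    rintro rfl
    exact hD (det2_self _)
  rcases hcuv with rfl | rfl <;> rcases hduv with rfl | rfl
  exacts [absurd rfl hcd, rfl, Sym2.eq_swap, absurd rfl hcd]

lemma ValidSegs.eq_of_mem_sector (hT : ValidSegs P T) (hoff : OffEdges T o) (hc : s(o, c) ∈ T)
    (hd : s(o, d) ∈ T) (hD : det2 (c - o) (d - o) ≠ 0) (huv : s(u, v) ∈ T)
    (hu : frameCoord o c d u ≤ 0 ∨ frameCoord o d c u ≤ 0)
    (hv : frameCoord o c d v ≤ 0 ∨ frameCoord o d c v ≤ 0) (hx : x ∈ segment ℝ u v)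
    (hX : 0 < frameCoord o c d x) (hY : 0 < frameCoord o d c x)
    (hXY : frameCoord o c d x + frameCoord o d c x ≤ 1) : s(u, v) = s(c, d) := by
  set X := frameCoord o c d
  set Y := frameCoord o d c
  have hX0 : X o = 0 := frameCoord_origin ..
  have hY0 : Y o = 0 := frameCoord_origin ..
  have ho : o ∉ segment ℝ u v := fun h => by
    obtain ⟨t, ht0, ht1, hf⟩ := exists_apply_eq_of_mem_segment hx
    rw [hf] at hX hY
    rcases hoff.eq_or_eq huv h with rfl | rfl
    · rcases hv with hv | hv <;> nlinarith
    · rcases hu with hu | hu <;> nlinarith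
  obtain ⟨m, hm, hm0⟩ := exists_mem_segment_min_eq_zero X Y hX.le hY.le hu
  obtain ⟨n, hn, hn0⟩ := exists_mem_segment_min_eq_zero X Y hX.le hY.le hv
  have hxmn : x ∈ segment ℝ m n := by
    rw [mem_segment_iff_wbtw] at hx hm hn ⊢
    exact ((hx.trans_left_right hm.symm).symm.trans_left_right hn.symm).symm
  have hm' := (convex_segment u v).segment_subset hx (left_mem_segment ℝ u v) hm
  have hn' := (convex_segment u v).segment_subset hx (right_mem_segment ℝ u v) hn
  obtain ⟨t, -, -, hf⟩ := exists_apply_eq_of_mem_segment hxmn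
  rcases min_eq_iff.1 hm0 with ⟨hXm, hYm⟩ | ⟨hYm, hXm⟩ <;>
    rcases min_eq_iff.1 hn0 with ⟨hXn, hYn⟩ | ⟨hYn, hXn⟩
  · simp [hf, hXm, hXn] at hX
  · exact hT.eq_of_mem_legs hc hd hD huv ho hm' hn' hxmn hXm (hXm ▸ hYm) hYn (hYn ▸ hXn) hX hY hXY
  · exact hT.eq_of_mem_legs hc hd hD huv ho hn' hm' (segment_symm ℝ m n ▸ hxmn) hXn (hXn ▸ hYn) hYm
      (hYm ▸ hXm) hX hY hXY
  · simp [hf, hYm, hYn] at hY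

end Cones

section Triangles

variable {P : Finset Pt} {T : Set (Sym2 Pt)} {c d o x y : Pt}

lemma Clockwise.det2_ne_zero (h : Clockwise o c d) : det2 (c - o) (d - o) ≠ 0 := ne_of_lt h

lemma Clockwise.frameCoord_left_pos_iff (h : Clockwise o c d) :
    0 < frameCoord o c d x ↔ Clockwise o x d := by
  rw [Clockwise, det2_swap, neg_lt_zero] at h
  rw [frameCoord_apply, div_pos_iff_of_pos_right h, Clockwise, det2_swap (x - o), neg_lt_zero]

lemma Clockwise.frameCoord_right_pos_iff (h : Clockwise o c d) :
    0 < frameCoord o d c x ↔ Clockwise o c x := by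
  rw [Clockwise] at h ⊢
  rw [frameCoord_apply, div_pos_iff]
  simp only [h, h.not_gt, and_true, and_false, false_or]

lemma Clockwise.sub_mem_leftHalfPlane_inf_iff (h : Clockwise o c d) :
    x - o ∈ leftHalfPlane (d - o) ⊓ leftHalfPlane (-(c - o)) ↔
      0 < frameCoord o c d x ∧ 0 < frameCoord o d c x := by
  rw [ConvexCone.mem_inf, mem_leftHalfPlane, mem_leftHalfPlane, det2_neg_left, neg_pos, det2_swap,
    neg_pos, h.frameCoord_left_pos_iff, h.frameCoord_right_pos_iff]
  rfl

lemma exists_neighbor_mem_sector (hT : IsTriangulation P T) (ho : o ∈ P) (hoff : OffEdges T o)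
    (hc : s(o, c) ∈ T) (hd : s(o, d) ∈ T) (hcd : Clockwise o c d) (hy : y ∈ skeleton P T)
    (hcy : Clockwise o c y) (hyd : Clockwise o y d)
    (hy1 : frameCoord o c d y + frameCoord o d c y ≤ 1)
    (hcdT : s(c, d) ∈ T → frameCoord o c d y + frameCoord o d c y < 1) :
    ∃ q, s(o, q) ∈ T ∧ Clockwise o c q ∧ Clockwise o q d := by
  set X := frameCoord o c d with hXdef
  set Y := frameCoord o d c with hYdef
  have hyo : y ≠ o := by
    rintro rfl
    simp [Clockwise, det2] at hcy
  set R := {x | 0 < X x ∧ 0 < Y x ∧ X x + Y x ≤ X y + Y y} with hRdef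
  have hstar : ∀ p ∈ R, ∀ x ∈ segment ℝ o p, x ≠ o → x ∈ R := by
    rintro p ⟨hX, hY, hXY⟩ x hx hxo
    obtain ⟨t, ht, ht1, rfl⟩ := exists_lineMap_eq_of_mem_segment hx hxo
    simp only [hRdef, mem_ofPred_eq, AffineMap.apply_lineMap, AffineMap.lineMap_apply_ring', hXdef,
      hYdef, frameCoord_origin, sub_zero, add_zero]
    exact ⟨mul_pos ht hX, mul_pos ht hY, by nlinarith⟩
  have hedge : ∀ u v, s(u, v) ∈ T → ∀ x ∈ R, x ∈ segment ℝ u v →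
      u - o ∈ leftHalfPlane (d - o) ⊓ leftHalfPlane (-(c - o)) ∨
        v - o ∈ leftHalfPlane (d - o) ⊓ leftHalfPlane (-(c - o)) := by
    rintro u v huv x ⟨hX, hY, hXY⟩ hx
    by_contra! hoffC
    simp only [hcd.sub_mem_leftHalfPlane_inf_iff, not_and_or, not_lt] at hoffC
    have heq := hT.1.eq_of_mem_sector hoff hc hd hcd.det2_ne_zero huv hoffC.1 hoffC.2 hx hX hY
      (hXY.trans hy1)
    have h1 : X x + Y x = 1 := frameCoord_add_eq_one_of_mem_segment hcd.det2_ne_zero (by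
      rcases Sym2.eq_iff.1 heq with ⟨rfl, rfl⟩ | ⟨rfl, rfl⟩
      exacts [hx, segment_symm ℝ u v ▸ hx])
    exact (hcdT (heq ▸ huv)).not_ge (h1 ▸ hXY)
  obtain ⟨q, hq, hqC⟩ := exists_neighbor_mem_cone hT ho hoff _
    (fun x hx => hcd.sub_mem_leftHalfPlane_inf_iff.2 ⟨hx.1, hx.2.1⟩) hstar hedge
    ⟨hcd.frameCoord_left_pos_iff.2 hyd, hcd.frameCoord_right_pos_iff.2 hcy, le_rfl⟩ hyo hy
  obtain ⟨hX, hY⟩ := hcd.sub_mem_leftHalfPlane_inf_iff.1 hqC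
  exact ⟨q, hq, hcd.frameCoord_right_pos_iff.1 hY, hcd.frameCoord_left_pos_iff.1 hX⟩

lemma affineMap_pos_of_mem_interior_convexHull {E : Type*} [NormedAddCommGroup E] [NormedSpace ℝ E]
    [FiniteDimensional ℝ E] {s : Set E} {a b x : E} (f : E →ᵃ[ℝ] ℝ) (hab : f a ≠ f b)
    (hs : ∀ y ∈ s, 0 ≤ f y) (hx : x ∈ interior (convexHull ℝ s)) : 0 < f x := by
  have hsurj : Function.Surjective f.linear := LinearMap.surjective fun h0 => hab <| by
    rw [← sub_eq_zero, ← vsub_eq_sub, ← AffineMap.linearMap_vsub, h0, LinearMap.zero_apply]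
  have hopen : IsOpenMap f :=
    AffineMap.isOpenMap_linear_iff.1 (f.linear.isOpenMap_of_finiteDimensional hsurj)
  have hnonneg : f '' interior (convexHull ℝ s) ⊆ Ici 0 := by
    rintro _ ⟨y, hy, rfl⟩
    exact convexHull_min hs ((convex_Ici 0).affine_preimage f) (interior_subset hy)
  have hpos := interior_maximal hnonneg (hopen _ isOpen_interior) (mem_image_of_mem f hx)
  rwa [interior_Ici] at hpos

lemma pos_of_mem_openTriangle (h : det2 (c - o) (d - o) ≠ 0) (hx : x ∈ openTriangle o c d) :
    0 < frameCoord o c d x ∧ 0 < frameCoord o d c x ∧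
      frameCoord o c d x + frameCoord o d c x < 1 := by
  have h' : det2 (d - o) (c - o) ≠ 0 := by rwa [det2_swap, neg_ne_zero]
  have hpos (f : Pt →ᵃ[ℝ] ℝ) {p q : Pt} (hpq : f p ≠ f q) (ho : 0 ≤ f o) (hc : 0 ≤ f c)
      (hd : 0 ≤ f d) : 0 < f x := by
    refine affineMap_pos_of_mem_interior_convexHull f hpq ?_ hx
    rintro y (rfl | rfl | rfl)
    exacts [ho, hc, hd]
  have hXY := hpos (AffineMap.const ℝ Pt 1 - (frameCoord o c d + frameCoord o d c))
    (p := o) (q := c)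
  simp only [AffineMap.coe_sub, AffineMap.coe_add, AffineMap.coe_const, Pi.sub_apply, Pi.add_apply,
    Function.const_apply, frameCoord_origin, frameCoord_left h, frameCoord_left h',
    frameCoord_right] at hXY
  refine ⟨hpos _ (p := c) (q := o) ?_ ?_ ?_ ?_, hpos _ (p := d) (q := o) ?_ ?_ ?_ ?_,
    sub_pos.1 (hXY ?_ ?_ ?_ ?_)⟩ <;>
    norm_num [frameCoord_origin, frameCoord_left h, frameCoord_left h', frameCoord_right]

lemma opposite_edge_mem_of_forall_neighbor (hT : IsTriangulation P T) (hoff : OffEdges T o)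
    (hc : s(o, c) ∈ T) (hd : s(o, d) ∈ T) (hcd : Clockwise o c d)
    (hemp : ∀ p, s(o, p) ∈ T → ¬(Clockwise o c p ∧ Clockwise o p d)) : s(c, d) ∈ T := by
  obtain ⟨ho, hcP, -⟩ := hT.1.mem_and_ne hc
  have hdP := (hT.1.mem_and_ne hd).2.1
  have hD := hcd.det2_ne_zero
  have hne : c ≠ d := by
    rintro rfl
    exact hD (det2_self _)
  by_contra hcdT
  obtain ⟨u, v, huv, x, hxcd, hxuv, hx⟩ := exists_crosses_of_notMem hT hcP hdP hne hcdT
  by_cases hxo : x ∈ openSegment ℝ c d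
  · have hX : 0 < frameCoord o c d x := frameCoord_pos_of_mem_openSegment hD hxo
    have hY : 0 < frameCoord o d c x := frameCoord_pos_of_mem_openSegment
      (by rwa [det2_swap, neg_ne_zero]) (openSegment_symm ℝ c d ▸ hxo)
    obtain ⟨q, hq, hqC⟩ := exists_neighbor_mem_sector hT ho hoff hc hd hcd
      (Or.inr ⟨u, v, huv, hxuv⟩) (hcd.frameCoord_right_pos_iff.1 hY)
      (hcd.frameCoord_left_pos_iff.1 hX) (frameCoord_add_eq_one_of_mem_segment hD hxcd).le
      fun h => absurd h hcdT
    exact hemp q hq hqC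
  · have hxe := eq_or_eq_of_mem_segment_of_notMem hxcd hxo
    refine hx ⟨hxe, ?_⟩
    rcases hxe with rfl | rfl
    exacts [hT.1.eq_or_eq_of_mem_segment hc huv hxuv, hT.1.eq_or_eq_of_mem_segment hd huv hxuv]

lemma isTriangleOf_of_forall_neighbor (hT : IsTriangulation P T) (hoff : OffEdges T o)
    (hc : s(o, c) ∈ T) (hd : s(o, d) ∈ T) (hcd : Clockwise o c d)
    (hemp : ∀ p, s(o, p) ∈ T → ¬(Clockwise o c p ∧ Clockwise o p d)) :
    IsTriangleOf P T o c d := by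
  obtain ⟨ho, hcP, hoc⟩ := hT.1.mem_and_ne hc
  obtain ⟨-, hdP, hod⟩ := hT.1.mem_and_ne hd
  have hcdT := opposite_edge_mem_of_forall_neighbor hT hoff hc hd hcd hemp
  have hfree : ∀ x ∈ skeleton P T, x ∉ openTriangle o c d := fun x hxs hx => by
    obtain ⟨hX, hY, hXY⟩ := pos_of_mem_openTriangle hcd.det2_ne_zero hx
    obtain ⟨q, hq, hqC⟩ := exists_neighbor_mem_sector hT ho hoff hc hd hcd hxs
      (hcd.frameCoord_right_pos_iff.1 hY) (hcd.frameCoord_left_pos_iff.1 hX) hXY.le fun _ => hXY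
    exact hemp q hq hqC
  exact ⟨ho, hcP, hdP, hoc, (hT.1.mem_and_ne hcdT).2.2, hod, hc, hcdT, hd,
    fun p hp => hfree p (Or.inl hp), fun u v huv x hx => hfree x (Or.inr ⟨u, v, huv, hx⟩)⟩

end Triangles

section Surrounded

variable {P Q S : Finset Pt} {T TQ : Set (Sym2 Pt)} {φ : Pt → Pt} {a i o v w : Pt}

lemma exists_angular_extrema {ι : Type*} {s : Finset ι} (hs : s.Nonempty) (g : ι → Pt)
    (h : ∀ i ∈ s, 0 < det2 w (g i)) :
    (∃ i ∈ s, ∀ j ∈ s, 0 ≤ det2 (g i) (g j)) ∧ ∃ i ∈ s, ∀ j ∈ s, 0 ≤ det2 (g j) (g i) := by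
  set cot : ι → ℝ := fun i => (w.1 * (g i).1 + w.2 * (g i).2) / det2 w (g i) with hcot
  have hmono : ∀ i ∈ s, ∀ j ∈ s, cot j ≤ cot i → 0 ≤ det2 (g i) (g j) := by
    intro i hi j hj hle
    rw [hcot, div_le_div_iff₀ (h j hj) (h i hi)] at hle
    by_contra! hlt
    have hi' := h i hi
    simp only [det2] at hle hlt hi'
    have hw : 0 < w.1 ^ 2 + w.2 ^ 2 := by
      by_contra! hle
      have h1 : w.1 = 0 := by nlinarith
      have h2 : w.2 = 0 := by nlinarith
      simp [h1, h2] at hi'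
    nlinarith
  obtain ⟨i, hi, hmax⟩ := s.exists_max_image cot hs
  obtain ⟨j, hj, hmin⟩ := s.exists_min_image cot hs
  exact ⟨⟨i, hi, fun k hk => hmono i hi k hk (hmax k hk)⟩,
    ⟨j, hj, fun k hk => hmono k hk j hj (hmin k hk)⟩⟩

/-- Every open half-plane bounded by a line through `o` contains a point of `P`; equivalently `o`
lies in the interior of the convex hull of `P`. -/
def Surrounds (P : Finset Pt) (o : Pt) : Prop :=
  ∀ w : Pt, w ≠ 0 → ∃ p ∈ P, 0 < det2 w (p - o)

lemma Surrounds.exists_extreme_neighbors (hsur : Surrounds P o) (hT : IsTriangulation P T)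
    (ho : o ∈ P) (hoff : OffEdges T o) (hw : w ≠ 0) :
    (∃ c, s(o, c) ∈ T ∧ 0 < det2 w (c - o) ∧
      ∀ p, s(o, p) ∈ T → 0 < det2 w (p - o) → 0 ≤ det2 (c - o) (p - o)) ∧
    ∃ d, s(o, d) ∈ T ∧ 0 < det2 w (d - o) ∧
      ∀ p, s(o, p) ∈ T → 0 < det2 w (p - o) → 0 ≤ det2 (p - o) (d - o) := by
  classical
  set N := P.filter fun q => s(o, q) ∈ T ∧ 0 < det2 w (q - o)
  have hN (q : Pt) : q ∈ N ↔ s(o, q) ∈ T ∧ 0 < det2 w (q - o) :=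
    Finset.mem_filter.trans (and_iff_right_of_imp fun h => (hT.1.mem_and_ne h.1).2.1)
  obtain ⟨p, hp, hwp⟩ := hsur w hw
  obtain ⟨q, hq⟩ := exists_neighbor_mem_leftHalfPlane hT ho hoff hp hwp
  obtain ⟨⟨c, hc, hcmin⟩, d, hd, hdmax⟩ :=
    exists_angular_extrema ⟨q, (hN q).2 hq⟩ (· - o) fun q hq => ((hN q).1 hq).2
  simp only [hN] at hc hd hcmin hdmax
  exact ⟨⟨c, hc.1, hc.2, fun p hp hwp => hcmin p ⟨hp, hwp⟩⟩,
    ⟨d, hd.1, hd.2, fun p hp hwp => hdmax p ⟨hp, hwp⟩⟩⟩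

lemma exists_isTriangleOf_of_forall_not_sameRay (hT : IsTriangulation P T) (ho : o ∈ P)
    (hoff : OffEdges T o) (hsur : Surrounds P o) (hw : w ≠ 0)
    (hray : ∀ q, s(o, q) ∈ T → ¬SameRay ℝ w (q - o)) :
    ∃ c d, IsTriangleOf P T o c d ∧ Clockwise o c d ∧ 0 < det2 w (c - o) ∧
      det2 w (d - o) < 0 := by
  obtain ⟨⟨c, hc, hwc, hcmin⟩, -⟩ := hsur.exists_extreme_neighbors hT ho hoff hw
  obtain ⟨-, d, hd, hwd, hdmax⟩ := hsur.exists_extreme_neighbors hT ho hoff (neg_ne_zero.2 hw)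
  simp only [det2_neg_left, neg_pos] at hwd hdmax
  have hright : ∀ p, s(o, p) ∈ T → det2 (c - o) (p - o) < 0 → det2 w (p - o) < 0 := by
    intro p hp hcp
    rcases lt_trichotomy (det2 w (p - o)) 0 with hwp | hwp | hwp
    · exact hwp
    · obtain ⟨r, hr⟩ := exists_eq_smul_of_det2_eq_zero hw hwp
      rw [hr, det2_smul_right, det2_swap] at hcp
      exact absurd (hr ▸ SameRay.sameRay_nonneg_smul_right w (by nlinarith)) (hray p hp)
    · exact absurd (hcmin p hp hwp) hcp.not_ge
  have hcd : Clockwise o c d := by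
    have hco : -(c - o) ≠ 0 := by
      rw [neg_ne_zero, sub_ne_zero]
      exact (hT.1.mem_and_ne hc).2.2.symm
    obtain ⟨p', hp', hcp'⟩ := hsur _ hco
    obtain ⟨p, hp, hcp⟩ := exists_neighbor_mem_leftHalfPlane hT ho hoff hp' hcp'
    rw [det2_neg_left, neg_pos] at hcp
    have hwp := hright p hp hcp
    have hpc : 0 < det2 (p - o) (c - o) := by rwa [det2_swap, neg_pos]
    rw [Clockwise]
    nlinarith [det2_mul_det2 w (p - o) (c - o) (d - o), hdmax p hp hwp,
      mul_pos_of_neg_of_neg hwp hwd, mul_neg_of_neg_of_pos hwd hpc,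
      mul_nonneg hwc.le (hdmax p hp hwp)]
  refine ⟨c, d, isTriangleOf_of_forall_neighbor hT hoff hc hd hcd ?_, hcd, hwc, hwd⟩
  exact fun p hp ⟨hcp, hpd⟩ => (hdmax p hp (hright p hp hcp)).not_gt hpd

lemma GenPos.notMem_openSegment (h : GenPos P) {p q r : Pt} (hp : p ∈ P) (hq : q ∈ P) (hr : r ∈ P)
    (hpq : p ≠ q) : r ∉ openSegment ℝ p q := by
  intro hrpq
  refine h p r q hp hr hq ?_ ?_ hpq
    (mem_segment_iff_wbtw.1 (openSegment_subset_segment ℝ p q hrpq)).collinear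
  · rintro rfl
    exact hpq (left_mem_openSegment_iff.1 hrpq)
  · rintro rfl
    exact hpq (right_mem_openSegment_iff.1 hrpq)

/-- The triangle at `i` containing the direction away from `a` avoids `a`, so `φ` reverses it. -/
lemma not_compatibleVia_of_surrounds (hgp : GenPos P) (hPS : P ⊆ S)
    (hSP : ∀ q ∈ S, q = a ∨ q ∈ P) (hφ : ∀ x ∈ P, ∀ y ∈ P, ∀ z ∈ P, Clockwise x y z →
      ¬Clockwise (φ x) (φ y) (φ z))
    (hi : i ∈ P) (hia : i ≠ a) (hsur : Surrounds P i) (hopp : ∀ p ∈ P, i ∉ openSegment ℝ a p)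
    (hT : IsTriangulation S T) : ¬CompatibleVia S Q T TQ φ := by
  intro hcompat
  have hoff : OffEdges T i := by
    intro u v huv hiuv
    obtain ⟨hu, hv, hne⟩ := hT.1.mem_and_ne huv
    rcases hSP u hu with rfl | hu
    · exact hopp v ((hSP v hv).resolve_left hne.symm) hiuv
    rcases hSP v hv with rfl | hv
    · exact hopp u hu (openSegment_symm ℝ u v ▸ hiuv)
    · exact hgp.notMem_openSegment hu hv hi hne hiuv
  have hray : ∀ q, s(i, q) ∈ T → ¬SameRay ℝ (i - a) (q - i) := by
    intro q hq hray
    obtain ⟨-, hqS, hiq⟩ := hT.1.mem_and_ne hq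
    have hiaq : i ∈ segment ℝ a q := mem_segment_iff_wbtw.2 (wbtw_iff_sameRay_vsub.2 hray)
    rcases hSP q hqS with rfl | hqP
    · rw [segment_same] at hiaq
      exact hia hiaq
    · exact hopp q hqP (mem_openSegment_of_ne_left_right hia.symm hiq.symm hiaq)
  obtain ⟨c, d, htri, hcw, hc, hd⟩ := exists_isTriangleOf_of_forall_not_sameRay hT (hPS hi) hoff
    (fun w hw => (hsur w hw).imp fun p hp => ⟨hPS hp.1, hp.2⟩) (sub_ne_zero.2 hia) hray
  have ha : det2 (i - a) (a - i) = 0 := by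
    rw [← neg_sub, det2_neg_left, det2_self, neg_zero]
  have hcP := (hSP c htri.2.1).resolve_left fun h => hc.ne' (h ▸ ha)
  have hdP := (hSP d htri.2.2.1).resolve_left fun h => hd.ne (h ▸ ha)
  exact hφ i hi c hcP d hdP hcw ((hcompat.2 i c d (hPS hi) (hPS hcP) (hPS hdP)).1 ⟨htri, hcw⟩).2

end Surrounded

section ProperCrossings

variable {a b c d u v w x : Pt}

lemma eq_zero_of_det2_eq_zero (huv : det2 u v ≠ 0) (hu : det2 u w = 0) (hv : det2 v w = 0) :
    w = 0 := by
  have h := det2_smul_eq w u v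
  rw [hu, det2_swap w, hv, neg_zero, zero_smul, zero_smul, add_zero] at h
  exact (smul_eq_zero.1 h).resolve_left huv

lemma exists_mem_segment_apply_eq_zero_of_mul_neg {f : Pt →ᵃ[ℝ] ℝ} (h : f a * f b < 0) :
    ∃ x ∈ segment ℝ a b, f x = 0 := by
  rcases mul_neg_iff.1 h with ⟨ha, hb⟩ | ⟨ha, hb⟩
  · rw [segment_symm]
    exact exists_mem_segment_apply_eq f hb.le ha.le
  · exact exists_mem_segment_apply_eq f ha.le hb.le

lemma det2_eq_zero_of_mem_segment (hx : x ∈ segment ℝ a b) : det2 (b - a) (x - a) = 0 := by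
  rw [det2_swap, neg_eq_zero]
  exact collinear_iff_det2.1 (mem_segment_iff_wbtw.1 hx).collinear

lemma crosses_of_det2_mul_neg (hcd : det2 (b - a) (c - a) * det2 (b - a) (d - a) < 0)
    (hab : det2 (d - c) (a - c) * det2 (d - c) (b - c) < 0) : Crosses a b c d := by
  obtain ⟨x, hx, hcx⟩ := exists_mem_segment_apply_eq_zero_of_mul_neg (f := sideForm c (d - c)) hab
  obtain ⟨y, hy, hay⟩ := exists_mem_segment_apply_eq_zero_of_mul_neg (f := sideForm a (b - a)) hcd
  have hax := det2_eq_zero_of_mem_segment hx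
  have hcy := det2_eq_zero_of_mem_segment hy
  rw [sideForm_apply] at hcx hay
  have hdir : det2 (b - a) (d - c) ≠ 0 := by
    intro h0
    have heq : det2 (b - a) (d - a) = det2 (b - a) (c - a) := by
      rw [← sub_add_sub_cancel d c a, det2_add_right, h0, zero_add]
    rw [heq] at hcd
    exact hcd.not_ge (mul_self_nonneg _)
  obtain rfl : x = y := by
    refine sub_eq_zero.1 (eq_zero_of_det2_eq_zero hdir ?_ ?_)
    · simp only [det2, Prod.fst_sub, Prod.snd_sub] at hax hay ⊢
      linear_combination hax - hay
    · simp only [det2, Prod.fst_sub, Prod.snd_sub] at hcx hcy ⊢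
      linear_combination hcx - hcy
  refine ⟨x, hx, hy, fun h => ?_⟩
  rcases h.1 with rfl | rfl <;> simp [hcx] at hab

lemma Crosses.det2_mul_neg (h : Crosses a b c d) (hne : s(a, b) ≠ s(c, d)) (hcd : c ≠ d)
    (hc : det2 (b - a) (c - a) = 0 → c = a ∨ c = b)
    (hd : det2 (b - a) (d - a) = 0 → d = a ∨ d = b) :
    det2 (b - a) (c - a) * det2 (b - a) (d - a) < 0 := by
  obtain ⟨x, hxab, hxcd, hx⟩ := h
  by_cases hxo : x ∈ openSegment ℝ c d
  · obtain ⟨t, ht0, ht1, hf⟩ := exists_apply_eq_of_mem_openSegment hxo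
    have hx0 := hf (sideForm a (b - a))
    rw [sideForm_apply, sideForm_apply, sideForm_apply, det2_eq_zero_of_mem_segment hxab] at hx0
    by_contra! hnonneg
    have hc0 : det2 (b - a) (c - a) = 0 := by
      by_contra h0
      have hsq : (1 - t) * (det2 (b - a) (c - a) * det2 (b - a) (c - a)) =
          -(t * (det2 (b - a) (c - a) * det2 (b - a) (d - a))) := by
        linear_combination -det2 (b - a) (c - a) * hx0
      linarith [mul_nonneg ht0.le hnonneg, mul_pos (sub_pos.2 ht1) (mul_self_pos.2 h0)]
    have hd0 : det2 (b - a) (d - a) = 0 := by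
      rw [hc0, mul_zero, zero_add, zero_eq_mul] at hx0
      exact hx0.resolve_left ht0.ne'
    rcases hc hc0 with rfl | rfl <;> rcases hd hd0 with rfl | rfl
    exacts [hcd rfl, hne rfl, hne Sym2.eq_swap, hcd rfl]
  · have hxe := eq_or_eq_of_mem_segment_of_notMem hxcd hxo
    have h0 := det2_eq_zero_of_mem_segment hxab
    rcases hxe with rfl | rfl
    exacts [absurd ⟨hc h0, Or.inl rfl⟩ hx, absurd ⟨hd h0, Or.inr rfl⟩ hx]

end ProperCrossings

section LatticeDrawings

variable {ι : Type*} {G : SimpleGraph ι} {pos pos' : ι → ℤ × ℤ} {ψ : Pt → Pt} {i j k l : ι}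

/-- The plane point with the given integer coordinates; lattice points make orientations
decidable. -/
def latticePt (p : ℤ × ℤ) : Pt := (p.1, p.2)

/-- The determinant of `b - a` and `c - a`, negative iff `(a, b, c)` is clockwise-ordered. -/
def latticeDet (a b c : ℤ × ℤ) : ℤ := (b.1 - a.1) * (c.2 - a.2) - (b.2 - a.2) * (c.1 - a.1)

/-- The segments `[a, b]` and `[c, d]` cross properly: each strictly separates the endpoints of
the other. -/
def ProperlyCross (a b c d : ℤ × ℤ) : Prop :=
  latticeDet a b c * latticeDet a b d < 0 ∧ latticeDet c d a * latticeDet c d b < 0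

instance (a b c d : ℤ × ℤ) : Decidable (ProperlyCross a b c d) :=
  inferInstanceAs (Decidable (_ ∧ _))

lemma latticePt_injective : Function.Injective latticePt := by
  rintro ⟨a, b⟩ ⟨c, d⟩ h
  simpa [latticePt] using h

lemma det2_latticePt (a b c : ℤ × ℤ) :
    det2 (latticePt b - latticePt a) (latticePt c - latticePt a) = latticeDet a b c := by
  simp [det2, latticePt, latticeDet]

lemma clockwise_latticePt {a b c : ℤ × ℤ} :
    Clockwise (latticePt a) (latticePt b) (latticePt c) ↔ latticeDet a b c < 0 := by
  rw [Clockwise, det2_latticePt, Int.cast_lt_zero]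

/-- The finite point set occupied by the lattice positions `pos`. -/
noncomputable def latticeSet [Fintype ι] (pos : ι → ℤ × ℤ) : Finset Pt :=
  Finset.univ.image fun i => latticePt (pos i)

lemma mem_latticeSet [Fintype ι] {p : Pt} : p ∈ latticeSet pos ↔ ∃ i, latticePt (pos i) = p := by
  simp [latticeSet]

lemma latticePt_notMem_latticeSet [Fintype ι] {c : ℤ × ℤ} (h : ∀ i, pos i ≠ c) :
    latticePt c ∉ latticeSet pos := by
  rw [mem_latticeSet]
  rintro ⟨i, hi⟩
  exact h i (latticePt_injective hi)

lemma latticeSet_vecCons {n : ℕ} (a : ℤ × ℤ) (pos : Fin n → ℤ × ℤ) :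
    latticeSet (Matrix.vecCons a pos) = insert (latticePt a) (latticeSet pos) := by
  ext p
  simp [mem_latticeSet, Fin.exists_fin_succ, eq_comm (a := p)]

/-- The lattice positions `pos` are distinct and in general position. -/
structure LatticeGenPos (pos : ι → ℤ × ℤ) : Prop where
  injective : Function.Injective pos
  det_ne_zero : ∀ i j k, i ≠ j → j ≠ k → i ≠ k → latticeDet (pos i) (pos j) (pos k) ≠ 0

namespace LatticeGenPos

lemma injective_latticePt (h : LatticeGenPos pos) :
    Function.Injective fun i => latticePt (pos i) :=
  latticePt_injective.comp h.injective

lemma card_latticeSet [Fintype ι] (h : LatticeGenPos pos) :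
    (latticeSet pos).card = Fintype.card ι :=
  Finset.card_image_of_injective _ h.injective_latticePt

lemma genPos [Fintype ι] (h : LatticeGenPos pos) : GenPos (latticeSet pos) := by
  intro a b c ha hb hc hab hbc hac
  obtain ⟨i, rfl⟩ := mem_latticeSet.1 ha
  obtain ⟨j, rfl⟩ := mem_latticeSet.1 hb
  obtain ⟨k, rfl⟩ := mem_latticeSet.1 hc
  rw [collinear_iff_det2, det2_latticePt, Int.cast_eq_zero]
  have hne {i j : ι} := (h.injective_latticePt.ne_iff (x := i) (y := j)).1
  exact h.det_ne_zero i j k (hne hab) (hne hbc) (hne hac)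

lemma latticeDet_mul_neg (h : LatticeGenPos pos) (hij : i ≠ j) (hkl : k ≠ l)
    (hne : s(i, j) ≠ s(k, l))
    (hc : Crosses (latticePt (pos i)) (latticePt (pos j)) (latticePt (pos k)) (latticePt (pos l))) :
    latticeDet (pos i) (pos j) (pos k) * latticeDet (pos i) (pos j) (pos l) < 0 := by
  have hzero (m : ι) : det2 (latticePt (pos j) - latticePt (pos i))
      (latticePt (pos m) - latticePt (pos i)) = 0 →
      latticePt (pos m) = latticePt (pos i) ∨ latticePt (pos m) = latticePt (pos j) := by
    rw [det2_latticePt, Int.cast_eq_zero]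
    intro h0
    by_contra! hm
    exact h.det_ne_zero i j m hij (h.injective_latticePt.ne_iff.1 hm.2.symm)
      (h.injective_latticePt.ne_iff.1 hm.1.symm) h0
  have hneg := hc.det2_mul_neg (fun heq => hne (Sym2.map.injective h.injective_latticePt heq))
    (h.injective_latticePt.ne hkl) (hzero k) (hzero l)
  rw [det2_latticePt, det2_latticePt] at hneg
  exact_mod_cast hneg

lemma crosses_iff_properlyCross (h : LatticeGenPos pos) (hij : i ≠ j) (hkl : k ≠ l)
    (hne : s(i, j) ≠ s(k, l)) :
    Crosses (latticePt (pos i)) (latticePt (pos j)) (latticePt (pos k)) (latticePt (pos l)) ↔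
      ProperlyCross (pos i) (pos j) (pos k) (pos l) := by
  refine ⟨fun hc => ⟨h.latticeDet_mul_neg hij hkl hne hc,
    h.latticeDet_mul_neg hkl hij hne.symm hc.symm⟩, fun hc => crosses_of_det2_mul_neg ?_ ?_⟩
  · rw [det2_latticePt, det2_latticePt]
    exact_mod_cast hc.1
  · rw [det2_latticePt, det2_latticePt]
    exact_mod_cast hc.2

end LatticeGenPos

lemma bijOn_latticeSet [Fintype ι] (h' : LatticeGenPos pos')
    (hψ : ∀ i, ψ (latticePt (pos i)) = latticePt (pos' i)) :
    BijOn ψ (latticeSet pos) (latticeSet pos') := by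
  simp only [latticeSet, Finset.coe_image, Finset.coe_univ, image_univ]
  refine ⟨?_, ?_, ?_⟩
  · rintro _ ⟨i, rfl⟩
    exact ⟨i, (hψ i).symm⟩
  · rintro _ ⟨i, rfl⟩ _ ⟨j, rfl⟩ hij
    rw [hψ, hψ] at hij
    rw [h'.injective_latticePt hij]
  · rintro _ ⟨i, rfl⟩
    exact ⟨_, ⟨i, rfl⟩, hψ i⟩

/-- The straight-line drawing of the edges of `G` with vertex `i` placed at `pos i`. -/
def drawing (G : SimpleGraph ι) (pos : ι → ℤ × ℤ) : Set (Sym2 Pt) :=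
  Sym2.map (fun i => latticePt (pos i)) '' G.edgeSet

lemma mem_drawing (h : LatticeGenPos pos) :
    s(latticePt (pos i), latticePt (pos j)) ∈ drawing G pos ↔ G.Adj i j :=
  (Sym2.map.injective h.injective_latticePt).mem_set_image (a := s(i, j))

lemma exists_adj_of_mem_drawing {u v : Pt} (h : s(u, v) ∈ drawing G pos) :
    ∃ i j, G.Adj i j ∧ latticePt (pos i) = u ∧ latticePt (pos j) = v := by
  obtain ⟨e, he, heq⟩ := h
  induction e with | _ i j
  rcases Sym2.eq_iff.1 heq with ⟨hu, hv⟩ | ⟨hv, hu⟩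
  exacts [⟨i, j, he, hu, hv⟩, ⟨j, i, he.symm, hu, hv⟩]

/-- The drawing of `G` at the lattice positions `pos` is a triangulation whose triangles are the
drawings of the triangles of `G`. The conditions are decidable for finite `G`. -/
structure IsLatticeTriangulation (G : SimpleGraph ι) (pos : ι → ℤ × ℤ) : Prop where
  latticeGenPos : LatticeGenPos pos
  adj_iff : ∀ i j, i ≠ j → (G.Adj i j ↔
    ∀ k l, G.Adj k l → ¬ProperlyCross (pos i) (pos j) (pos k) (pos l))
  sector : ∀ i j k, G.Adj i j → G.Adj j k → G.Adj i k → latticeDet (pos i) (pos j) (pos k) < 0 →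
    ∀ l, G.Adj i l → ¬(latticeDet (pos i) (pos j) (pos l) < 0 ∧
      latticeDet (pos i) (pos l) (pos k) < 0)

namespace IsLatticeTriangulation

lemma validSegs [Fintype ι] (h : IsLatticeTriangulation G pos) :
    ValidSegs (latticeSet pos) (drawing G pos) := by
  refine ⟨?_, ?_⟩
  · rintro ⟨u, v⟩ huv
    obtain ⟨i, j, hij, rfl, rfl⟩ := exists_adj_of_mem_drawing huv
    exact ⟨_, _, mem_latticeSet.2 ⟨i, rfl⟩, mem_latticeSet.2 ⟨j, rfl⟩,
      h.latticeGenPos.injective_latticePt.ne hij.ne, rfl⟩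
  · intro a b c d hab hcd hne hcross
    obtain ⟨i, j, hij, rfl, rfl⟩ := exists_adj_of_mem_drawing hab
    obtain ⟨k, l, hkl, rfl, rfl⟩ := exists_adj_of_mem_drawing hcd
    rw [h.latticeGenPos.crosses_iff_properlyCross hij.ne hkl.ne
      (ne_of_apply_ne (Sym2.map fun i => latticePt (pos i)) hne)] at hcross
    exact (h.adj_iff i j hij.ne).1 hij k l hkl hcross

lemma isTriangulation [Fintype ι] (h : IsLatticeTriangulation G pos) :
    IsTriangulation (latticeSet pos) (drawing G pos) := by
  refine isTriangulation_iff.2 ⟨h.validSegs, fun p hp q hq hpq hpqT => ?_⟩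
  obtain ⟨i, rfl⟩ := mem_latticeSet.1 hp
  obtain ⟨j, rfl⟩ := mem_latticeSet.1 hq
  have hij : i ≠ j := h.latticeGenPos.injective_latticePt.ne_iff.1 hpq
  rw [mem_drawing h.latticeGenPos, h.adj_iff i j hij] at hpqT
  push Not at hpqT
  obtain ⟨k, l, hkl, hcross⟩ := hpqT
  have hne : s(i, j) ≠ s(k, l) := by
    intro heq
    have hij' : G.Adj i j := by rwa [← SimpleGraph.mem_edgeSet, heq]
    exact (h.adj_iff i j hij).1 hij' k l hkl hcross
  exact ⟨_, _, (mem_drawing h.latticeGenPos).2 hkl,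
    (h.latticeGenPos.crosses_iff_properlyCross hij hkl.ne hne).2 hcross⟩

lemma isTriangleOf_and_clockwise_iff [Fintype ι] (h : IsLatticeTriangulation G pos) :
    IsTriangleOf (latticeSet pos) (drawing G pos) (latticePt (pos i)) (latticePt (pos j))
        (latticePt (pos k)) ∧
        Clockwise (latticePt (pos i)) (latticePt (pos j)) (latticePt (pos k)) ↔
      G.Adj i j ∧ G.Adj j k ∧ G.Adj i k ∧ latticeDet (pos i) (pos j) (pos k) < 0 := by
  simp only [clockwise_latticePt]
  constructor
  · rintro ⟨⟨-, -, -, -, -, -, hij, hjk, hik, -⟩, hneg⟩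
    rw [mem_drawing h.latticeGenPos] at hij hjk hik
    exact ⟨hij, hjk, hik, hneg⟩
  · rintro ⟨hij, hjk, hik, hneg⟩
    have hT := h.isTriangulation
    have hoff : OffEdges (drawing G pos) (latticePt (pos i)) := fun u v huv =>
      have ⟨hu, hv, hne⟩ := hT.1.mem_and_ne huv
      h.latticeGenPos.genPos.notMem_openSegment hu hv (mem_latticeSet.2 ⟨i, rfl⟩) hne
    refine ⟨isTriangleOf_of_forall_neighbor hT hoff ((mem_drawing h.latticeGenPos).2 hij)
      ((mem_drawing h.latticeGenPos).2 hik) (clockwise_latticePt.2 hneg) fun p hp => ?_, hneg⟩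
    obtain ⟨l, rfl⟩ := mem_latticeSet.1 (hT.1.mem_and_ne hp).2.1
    rw [clockwise_latticePt, clockwise_latticePt]
    exact h.sector i j k hij hjk hik hneg l ((mem_drawing h.latticeGenPos).1 hp)

lemma compatibleVia [Fintype ι] (h : IsLatticeTriangulation G pos)
    (h' : IsLatticeTriangulation G pos') (hψ : ∀ i, ψ (latticePt (pos i)) = latticePt (pos' i))
    (horient : ∀ i j k, G.Adj i j → G.Adj j k → G.Adj i k →
      (latticeDet (pos i) (pos j) (pos k) < 0 ↔ latticeDet (pos' i) (pos' j) (pos' k) < 0)) :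
    CompatibleVia (latticeSet pos) (latticeSet pos') (drawing G pos) (drawing G pos') ψ := by
  refine ⟨bijOn_latticeSet h'.latticeGenPos hψ, fun a b c ha hb hc => ?_⟩
  obtain ⟨i, rfl⟩ := mem_latticeSet.1 ha
  obtain ⟨j, rfl⟩ := mem_latticeSet.1 hb
  obtain ⟨k, rfl⟩ := mem_latticeSet.1 hc
  rw [hψ, hψ, hψ, h.isTriangleOf_and_clockwise_iff, h'.isTriangleOf_and_clockwise_iff]
  exact and_congr_right fun hij => and_congr_right fun hjk => and_congr_right fun hik =>
    horient i j k hij hjk hik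

end IsLatticeTriangulation

end LatticeDrawings

section Example

variable {a i p x y z : Pt}

/-- The reflection in the vertical axis. -/
def mirror (p : Pt) : Pt := (-p.1, p.2)

lemma Clockwise.not_mirror (h : Clockwise x y z) :
    ¬Clockwise (mirror x) (mirror y) (mirror z) := by
  simp only [Clockwise, det2, mirror, Prod.fst_sub, Prod.snd_sub] at h ⊢
  linarith

/-- The point set `P`. The points with indices 0, 3, 5 span the convex hull. -/
def path : Fin 6 → ℤ × ℤ := ![(-3, -3), (-2, -2), (-2, -1), (2, 1), (0, 2), (-1, 3)]

/-- The point set `Q`, the mirror image of `path`. -/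
def mirrorPath : Fin 6 → ℤ × ℤ := fun i => (-(path i).1, (path i).2)

lemma latticeGenPos_path : LatticeGenPos path :=
  ⟨by decide +kernel, by decide +kernel⟩

lemma latticeGenPos_mirrorPath : LatticeGenPos mirrorPath :=
  ⟨by decide +kernel, by decide +kernel⟩

lemma mirror_path (i : Fin 6) : mirror (latticePt (path i)) = latticePt (mirrorPath i) := by
  simp [mirror, latticePt, mirrorPath]

lemma mem_latticeSet_path : p ∈ latticeSet path ↔ p = (-3, -3) ∨ p = (-2, -2) ∨ p = (-2, -1) ∨
    p = (2, 1) ∨ p = (0, 2) ∨ p = (-1, 3) := by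
  simp [mem_latticeSet, Fin.exists_fin_succ, path, latticePt, eq_comm (b := p)]

lemma surrounds_path_of_forall_eq_zero
    (h : ∀ w : Pt, det2 w ((-3, -3) - i) ≤ 0 → det2 w ((2, 1) - i) ≤ 0 →
      det2 w ((-1, 3) - i) ≤ 0 → w = 0) : Surrounds (latticeSet path) i := by
  intro w hw
  by_contra! hle
  exact hw (h w (hle _ (by simp [mem_latticeSet_path])) (hle _ (by simp [mem_latticeSet_path]))
    (hle _ (by simp [mem_latticeSet_path])))

lemma surrounds_path (hi : i = (-2, -2) ∨ i = (-2, -1) ∨ i = (0, 2)) :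
    Surrounds (latticeSet path) i := by
  refine surrounds_path_of_forall_eq_zero fun w h1 h2 h3 => ?_
  rcases hi with rfl | rfl | rfl <;> simp only [det2, Prod.mk_sub_mk] at h1 h2 h3 <;>
    exact Prod.ext (by simp only [Prod.fst_zero]; linarith) (by simp only [Prod.snd_zero]; linarith)

lemma exists_surrounded_notMem_openSegment (ha : a ∉ latticeSet path) :
    ∃ i ∈ latticeSet path, Surrounds (latticeSet path) i ∧
      ∀ p ∈ latticeSet path, i ∉ openSegment ℝ a p := by
  by_contra! hcon
  have hopp (i : Pt) (hi : i = (-2, -2) ∨ i = (-2, -1) ∨ i = (0, 2)) :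
      ∃ p ∈ latticeSet path, ∃ s : ℝ, 0 < s ∧ a.1 = i.1 + s * (i.1 - p.1) ∧
        a.2 = i.2 + s * (i.2 - p.2) := by
    obtain ⟨p, hp, hip⟩ := hcon i (by rw [mem_latticeSet_path]; tauto) (surrounds_path hi)
    obtain ⟨s, hs, has⟩ := exists_eq_add_smul_of_mem_openSegment hip
    exact ⟨p, hp, s, hs, Prod.ext_iff.1 has⟩
  simp only [mem_latticeSet_path] at hopp ha
  have h1 : a.2 = a.1 ∨ a.2 < -2 := by
    obtain ⟨p, rfl | rfl | rfl | rfl | rfl | rfl, s, hs, hx, hy⟩ := hopp (-2, -2) (by simp) <;>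
      first | exact Or.inl (by linarith) | exact Or.inr (by linarith)
  have h2 : a.2 = 2 * a.1 + 3 ∨ a.1 ≤ -2 := by
    obtain ⟨p, rfl | rfl | rfl | rfl | rfl | rfl, s, hs, hx, hy⟩ := hopp (-2, -1) (by simp) <;>
      first | exact Or.inl (by linarith) | exact Or.inr (by linarith)
  have h3 : 0 < a.1 ∨ 2 < a.2 ∧ a.1 < 0 ∨ a = (0, 2) := by
    obtain ⟨p, rfl | rfl | rfl | rfl | rfl | rfl, s, hs, hx, hy⟩ := hopp (0, 2) (by simp) <;>
      first
      | exact Or.inl (by linarith)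
      | exact Or.inr (Or.inl ⟨by linarith, by linarith⟩)
      | exact Or.inr (Or.inr (Prod.ext (by linarith) (by linarith)))
  rcases h3 with hx | ⟨hy, hx⟩ | rfl
  · rcases h1 with h1 | h1 <;> rcases h2 with h2 | h2 <;> linarith
  · rcases h1 with h1 | h1 <;> linarith
  · simp at ha

lemma not_compatibleVia_of_notMem_path {S Q : Finset Pt} {T TQ : Set (Sym2 Pt)} {φ : Pt → Pt}
    (ha : a ∉ latticeSet path) (hPS : latticeSet path ⊆ S)
    (hSP : ∀ q ∈ S, q = a ∨ q ∈ latticeSet path) (hφ : ∀ x ∈ latticeSet path, φ x = mirror x)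
    (hT : IsTriangulation S T) : ¬CompatibleVia S Q T TQ φ := by
  obtain ⟨i, hi, hsur, hopp⟩ := exists_surrounded_notMem_openSegment ha
  refine not_compatibleVia_of_surrounds latticeGenPos_path.genPos hPS hSP ?_ hi
    (ne_of_mem_of_not_mem hi ha) hsur hopp hT
  intro x hx y hy z hz hxyz
  rw [hφ x hx, hφ y hy, hφ z hz]
  exact hxyz.not_mirror

/-- The vertices 0 and 1 are the two Steiner points; both are joined to every vertex of the
path 2, …, 7. -/
def doubleFan : SimpleGraph (Fin 8) :=
  SimpleGraph.fromRel fun i j => (i < 2 ∧ 2 ≤ j) ∨ (2 ≤ i ∧ j.val = i.val + 1)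

instance : DecidableRel doubleFan.Adj :=
  inferInstanceAs (DecidableRel (SimpleGraph.fromRel _).Adj)

/-- The positions `pos` preceded by those of the Steiner points. -/
def withSteiner (pos : Fin 6 → ℤ × ℤ) : Fin 8 → ℤ × ℤ :=
  Matrix.vecCons (-5, 0) (Matrix.vecCons (5, 0) pos)

lemma isLatticeTriangulation_path : IsLatticeTriangulation doubleFan (withSteiner path) where
  latticeGenPos := ⟨by decide +kernel, by decide +kernel⟩
  adj_iff := by decide +kernel
  sector := by decide +kernel

lemma isLatticeTriangulation_mirrorPath :
    IsLatticeTriangulation doubleFan (withSteiner mirrorPath) where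
  latticeGenPos := ⟨by decide +kernel, by decide +kernel⟩
  adj_iff := by decide +kernel
  sector := by decide +kernel

lemma latticeSet_withSteiner (pos : Fin 6 → ℤ × ℤ) : latticeSet (withSteiner pos) =
    insert (latticePt (-5, 0)) (insert (latticePt (5, 0)) (latticeSet pos)) := by
  rw [withSteiner, latticeSet_vecCons, latticeSet_vecCons]

lemma latticeDet_withSteiner_neg_iff : ∀ i j k, doubleFan.Adj i j → doubleFan.Adj j k →
    doubleFan.Adj i k →
    (latticeDet (withSteiner path i) (withSteiner path j) (withSteiner path k) < 0 ↔
      latticeDet (withSteiner mirrorPath i) (withSteiner mirrorPath j)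
        (withSteiner mirrorPath k) < 0) := by
  decide +kernel

lemma exists_compatibleVia : ∃ ψ : Pt → Pt,
    (∀ x ∈ latticeSet path, ψ x = mirror x) ∧ ψ (latticePt (-5, 0)) = latticePt (-5, 0) ∧
      ψ (latticePt (5, 0)) = latticePt (5, 0) ∧
      CompatibleVia (latticeSet (withSteiner path)) (latticeSet (withSteiner mirrorPath))
        (drawing doubleFan (withSteiner path)) (drawing doubleFan (withSteiner mirrorPath)) ψ := by
  have hinj := isLatticeTriangulation_path.latticeGenPos.injective_latticePt
  obtain ⟨ψ, hψ⟩ : ∃ ψ : Pt → Pt,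
      ∀ i, ψ (latticePt (withSteiner path i)) = latticePt (withSteiner mirrorPath i) :=
    ⟨_, hinj.extend_apply (fun i => latticePt (withSteiner mirrorPath i)) id⟩
  refine ⟨ψ, fun x hx => ?_, hψ 0, hψ 1, isLatticeTriangulation_path.compatibleVia
    isLatticeTriangulation_mirrorPath hψ latticeDet_withSteiner_neg_iff⟩
  obtain ⟨i, rfl⟩ := mem_latticeSet.1 hx
  rw [mirror_path]
  exact hψ i.succ.succ

end Example

/-- Two mapped 6-point sets in general position that have no compatible
triangulations, none even after adding one Steiner point to each, but that do have
compatible triangulations after adding two Steiner points to each. -/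
theorem stmt13 :
    ∃ (P Q : Finset Pt) (φ : Pt → Pt),
      P.card = 6 ∧ Q.card = 6 ∧ GenPos P ∧ GenPos Q ∧
      Set.BijOn φ (P : Set Pt) (Q : Set Pt) ∧
      (∀ TP TQ : Set (Sym2 Pt), IsTriangulation P TP → IsTriangulation Q TQ →
        ¬ CompatibleVia P Q TP TQ φ) ∧
      (∀ aP aQ : Pt, aP ∉ P → aQ ∉ Q →
        ∀ ψ : Pt → Pt, (∀ x ∈ P, ψ x = φ x) → ψ aP = aQ →
          ∀ TP TQ : Set (Sym2 Pt),
            IsTriangulation (insert aP P) TP → IsTriangulation (insert aQ Q) TQ →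
            ¬ CompatibleVia (insert aP P) (insert aQ Q) TP TQ ψ) ∧
      (∃ aP bP aQ bQ : Pt, aP ∉ P ∧ bP ∉ P ∧ aP ≠ bP ∧ aQ ∉ Q ∧ bQ ∉ Q ∧ aQ ≠ bQ ∧
        ∃ (ψ : Pt → Pt) (TP TQ : Set (Sym2 Pt)),
          (∀ x ∈ P, ψ x = φ x) ∧ ψ aP = aQ ∧ ψ bP = bQ ∧
          IsTriangulation (insert aP (insert bP P)) TP ∧
          IsTriangulation (insert aQ (insert bQ Q)) TQ ∧
          CompatibleVia (insert aP (insert bP P)) (insert aQ (insert bQ Q)) TP TQ ψ) := by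
  have hsteiner (c : ℤ × ℤ) (hc : c = (-5, 0) ∨ c = (5, 0)) :
      latticePt c ∉ latticeSet path ∧ latticePt c ∉ latticeSet mirrorPath := by
    rcases hc with rfl | rfl <;>
      exact ⟨latticePt_notMem_latticeSet (by decide), latticePt_notMem_latticeSet (by decide)⟩
  obtain ⟨haP, haQ⟩ := hsteiner (-5, 0) (Or.inl rfl)
  obtain ⟨hbP, hbQ⟩ := hsteiner (5, 0) (Or.inr rfl)
  have hab : latticePt (-5, 0) ≠ latticePt (5, 0) := latticePt_injective.ne (by decide)
  obtain ⟨ψ, hφ, hψa, hψb, hcompat⟩ := exists_compatibleVia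
  have hTP := isLatticeTriangulation_path.isTriangulation
  have hTQ := isLatticeTriangulation_mirrorPath.isTriangulation
  rw [latticeSet_withSteiner] at hTP hTQ
  rw [latticeSet_withSteiner, latticeSet_withSteiner] at hcompat
  refine ⟨latticeSet path, latticeSet mirrorPath, mirror, latticeGenPos_path.card_latticeSet,
    latticeGenPos_mirrorPath.card_latticeSet, latticeGenPos_path.genPos,
    latticeGenPos_mirrorPath.genPos, bijOn_latticeSet latticeGenPos_mirrorPath mirror_path, ?_, ?_,
    _, _, _, _, haP, hbP, hab, haQ, hbQ, hab, ψ, _, _, hφ, hψa, hψb, hTP, hTQ, hcompat⟩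
  · intro TP TQ hTP _
    exact not_compatibleVia_of_notMem_path haP Subset.rfl (fun q => Or.inr) (fun _ _ => rfl) hTP
  · intro aP aQ haP _ ψ hψ _ TP TQ hTP _
    exact not_compatibleVia_of_notMem_path haP (Finset.subset_insert _ _)
      (fun q => Finset.mem_insert.1) hψ hTP
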